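/- arXiv:1810.08932 — 9 statements merged into one kernel-verified Lean document; each statement's English description precedes it below -/
import Mathlib

section
/- Let (v_t)_{t=1,…,n} be a family of n < 16 nonzero, pairwise orthogonal A:B:C:D product vectors in the 4-qubit space V. Then there exists a nonzero ABC:D product vector orthogonal to every v_t. In particular, no 4-qubit orthogonal product family of size less than 16 (hence no 4-qubit UPB, all of which have size at most 12) remains a UPB in the coarse graining ℂ⁸⊗ℂ². -/
/-- The 4-qubit index type. -/
abbrev Q4 : Type := Fin 2 × Fin 2 × Fin 2 × Fin 2

/-- The standard inner product on the 4-qubit space `Q4 → ℂ`. -/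
noncomputable def ip (v w : Q4 → ℂ) : ℂ := ∑ x, (starRingEnd ℂ) (v x) * w x

/-- `v` is an `A:B:C:D` product vector. -/
def IsProdABCD (v : Q4 → ℂ) : Prop :=
  ∃ a b c d : Fin 2 → ℂ, v = fun p => a p.1 * b p.2.1 * c p.2.2.1 * d p.2.2.2

/-!
Write the vectors of the family as `x t ⊗ d t` in `E ⊗ F` with `dim F = 2`, and for a line `L` of
`F` let `X L` be the span of the `x t` with `d t ∈ L`. When `d s` lies neither on `L` nor on `Lᗮ`,
it is orthogonal to no nonzero vector of either line, so `x s` must be orthogonal to `X L` and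
`X Lᗮ`. Hence if some `y ∈ X L` is not in `X Lᗮ`, the component of `y` orthogonal to `X Lᗮ`,
tensored with a vector of `Lᗮ`, is a product vector orthogonal to the family. Otherwise
`X L ≤ X Lᗮ` for every line, so each `x t` lies in both `X L` and `X Lᗮ` for `L` the line of `d t`;
since `F = L ⊕ Lᗮ`, the family then spans `Y ⊗ F`, where `Y` is the span of all the `x t`. As there
are fewer than `dim (E ⊗ F)` vectors, `Y ≠ E`, and any nonzero `u ⊗ w` with `u ∈ Yᗮ` is orthogonal
to the family.
-/

section LinearAlgebra

open Module Submodule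
open scoped TensorProduct

section CommSemiring

variable {R M N κ : Type*} [CommSemiring R] [AddCommMonoid M] [Module R M] [AddCommMonoid N]
  [Module R N]

/-- The span of the first factors of those product vectors `x t ⊗ d t` whose second factor lies
in `L`; the argument compares these spaces for a line and its orthogonal complement. -/
def fiberSpan (x : κ → M) (d : κ → N) (L : Submodule R N) : Submodule R M :=
  span R (x '' {t | d t ∈ L})

theorem mem_fiberSpan {x : κ → M} {d : κ → N} {L : Submodule R N} {t : κ}
    (ht : d t ∈ L) : x t ∈ fiberSpan x d L :=
  subset_span (Set.mem_image_of_mem x ht)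

theorem tmul_mem_of_mem_span {S : Submodule R (M ⊗[R] N)} {s : Set M} {f : N}
    (hs : ∀ y ∈ s, y ⊗ₜ[R] f ∈ S) {y : M} (hy : y ∈ span R s) : y ⊗ₜ[R] f ∈ S :=
  span_le (p := S.comap ((TensorProduct.mk R M N).flip f)).2 hs hy

theorem eq_top_of_tmul_mem {S : Submodule R (M ⊗[R] N)} {s : Set M} (hs : span R s = ⊤)
    (hS : ∀ y ∈ s, ∀ f, y ⊗ₜ[R] f ∈ S) : S = ⊤ := by
  rw [eq_top_iff, ← TensorProduct.span_tmul_eq_top R M N, span_le]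
  rintro _ ⟨y, f, rfl⟩
  have hy : y ∈ span R s := hs ▸ mem_top
  exact tmul_mem_of_mem_span (fun z hz => hS z hz f) hy

end CommSemiring

section Field

variable {K V W κ : Type*} [Field K] [AddCommGroup V] [Module K V] [AddCommGroup W] [Module K W]
  {L : Submodule K W}

theorem exists_smul_eq_of_mem_line (hL : finrank K L = 1) {v w : W} (hv : v ∈ L) (hv0 : v ≠ 0)
    (hw : w ∈ L) : ∃ c : K, c • v = w := by
  have hv0' : (⟨v, hv⟩ : L) ≠ 0 := by simpa using hv0
  obtain ⟨c, hc⟩ := exists_smul_eq_of_finrank_eq_one hL hv0' ⟨w, hw⟩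
  exact ⟨c, congrArg Subtype.val hc⟩

theorem tmul_mem_span_of_mem_fiberSpan {x : κ → V} {d : κ → W} (hd : ∀ t, d t ≠ 0)
    (hL : finrank K L = 1) {y : V} (hy : y ∈ fiberSpan x d L) {f : W} (hf : f ∈ L) :
    y ⊗ₜ[K] f ∈ span K (Set.range fun t => x t ⊗ₜ[K] d t) := by
  refine tmul_mem_of_mem_span ?_ hy
  rintro _ ⟨t, ht, rfl⟩
  obtain ⟨c, rfl⟩ := exists_smul_eq_of_mem_line hL ht (hd t) hf
  rw [TensorProduct.tmul_smul]
  exact smul_mem _ c (subset_span (Set.mem_range_self t))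

end Field

end LinearAlgebra

section InnerProductSpace

open Module Submodule
open scoped InnerProductSpace TensorProduct

variable {𝕜 E F κ : Type*} [RCLike 𝕜] [NormedAddCommGroup E] [InnerProductSpace 𝕜 E]
  [NormedAddCommGroup F] [InnerProductSpace 𝕜 F] {x : κ → E} {d : κ → F} {L : Submodule 𝕜 F}

variable (𝕜) in
/-- The family of product vectors `x t ⊗ d t` is extendible: some nonzero `u ⊗ w` is orthogonal to
all of them. Orthogonality of product vectors is expressed factorwise, as
`⟪x ⊗ d, u ⊗ w⟫ = ⟪x, u⟫ * ⟪d, w⟫`. -/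
def Extendible (x : κ → E) (d : κ → F) : Prop :=
  ∃ u : E, u ≠ 0 ∧ ∃ w : F, w ≠ 0 ∧ ∀ t, ⟪x t, u⟫_𝕜 = 0 ∨ ⟪d t, w⟫_𝕜 = 0

theorem inner_ne_zero_of_notMem_orthogonal (hL : finrank 𝕜 L = 1) {v w : F} (hv : v ∈ L)
    (hv0 : v ≠ 0) (hw : w ∉ Lᗮ) : ⟪w, v⟫_𝕜 ≠ 0 := by
  refine fun h => hw ((mem_orthogonal' L w).2 fun y hy => ?_)
  obtain ⟨c, rfl⟩ := exists_smul_eq_of_mem_line hL hv hv0 hy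
  rw [inner_smul_right, h, mul_zero]

theorem mem_orthogonal_fiberSpan_of_notMem (hd : ∀ t, d t ≠ 0)
    (horth : Pairwise fun s t => ⟪x s, x t⟫_𝕜 = 0 ∨ ⟪d s, d t⟫_𝕜 = 0)
    (hL : finrank 𝕜 L = 1) {s : κ} (hs : d s ∉ L) (hs' : d s ∉ Lᗮ) :
    x s ∈ (fiberSpan x d L)ᗮ := by
  rw [← span_singleton_le_iff_mem, ← isOrtho_iff_le, fiberSpan, isOrtho_span]
  rintro _ rfl _ ⟨t, ht, rfl⟩
  have hst : s ≠ t := fun h => hs (h ▸ ht)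
  exact (horth hst).resolve_right (inner_ne_zero_of_notMem_orthogonal hL ht (hd t) hs')

theorem fiberSpan_le_orthogonal_of_not_extendible [FiniteDimensional 𝕜 E] (hd : ∀ t, d t ≠ 0)
    (horth : Pairwise fun s t => ⟪x s, x t⟫_𝕜 = 0 ∨ ⟪d s, d t⟫_𝕜 = 0)
    (hext : ¬ Extendible 𝕜 x d) (hL : finrank 𝕜 L = 1) (hL' : finrank 𝕜 Lᗮ = 1) :
    fiberSpan x d L ≤ fiberSpan x d Lᗮ := by
  have : FiniteDimensional 𝕜 L := finite_of_finrank_eq_succ hL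
  have hbot : Lᗮ ≠ ⊥ := by
    intro h
    rw [h, finrank_bot] at hL'
    exact zero_ne_one hL'
  set X' := fiberSpan x d Lᗮ
  by_contra hle
  obtain ⟨y, hy, hyX'⟩ := SetLike.not_le_iff_exists.1 hle
  obtain ⟨w, hw, hw0⟩ := exists_mem_ne_zero_of_ne_bot hbot
  have hu : y - X'.starProjection y ∈ X'ᗮ := sub_starProjection_mem_orthogonal y
  refine hext ⟨y - X'.starProjection y, fun h => hyX' ?_, w, hw0, fun s => ?_⟩
  · exact sub_eq_zero.1 h ▸ X'.starProjection_apply_mem y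
  by_cases hs : d s ∈ L
  · exact .inr (hw _ hs)
  by_cases hs' : d s ∈ Lᗮ
  · exact .inl (hu _ (mem_fiberSpan hs'))
  have hsX : x s ∈ (fiberSpan x d L)ᗮ :=
    mem_orthogonal_fiberSpan_of_notMem hd horth hL hs hs'
  have hsX' : x s ∈ X'ᗮ :=
    mem_orthogonal_fiberSpan_of_notMem hd horth hL' hs' (by rwa [orthogonal_orthogonal])
  left
  rw [inner_sub_right, inner_left_of_mem_orthogonal hy hsX,
    inner_left_of_mem_orthogonal (X'.starProjection_apply_mem y) hsX', sub_zero]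

theorem tmul_mem_span_of_fiberSpan_le_orthogonal (hd : ∀ t, d t ≠ 0) (hL : finrank 𝕜 L = 1)
    (hL' : finrank 𝕜 Lᗮ = 1) (hle : fiberSpan x d L ≤ fiberSpan x d Lᗮ) {y : E}
    (hy : y ∈ fiberSpan x d L) (f : F) :
    y ⊗ₜ[𝕜] f ∈ span 𝕜 (Set.range fun t => x t ⊗ₜ[𝕜] d t) := by
  have : FiniteDimensional 𝕜 L := finite_of_finrank_eq_succ hL
  rw [← L.starProjection_add_starProjection_orthogonal f, TensorProduct.tmul_add]
  exact add_mem (tmul_mem_span_of_mem_fiberSpan hd hL hy (starProjection_apply_mem _ f))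
    (tmul_mem_span_of_mem_fiberSpan hd hL' (hle hy) (starProjection_apply_mem _ f))

theorem extendible_of_span_ne_top [FiniteDimensional 𝕜 E] [Nontrivial F]
    (hx : span 𝕜 (Set.range x) ≠ ⊤) : Extendible 𝕜 x d := by
  obtain ⟨w, hw⟩ := exists_ne (0 : F)
  obtain ⟨u, hu, hu0⟩ := exists_mem_ne_zero_of_ne_bot (mt (orthogonal_eq_bot_iff).1 hx)
  exact ⟨u, hu0, w, hw, fun t => .inl (hu _ (subset_span (Set.mem_range_self t)))⟩

theorem extendible_of_card_lt [Fintype κ] (hF : finrank 𝕜 F = 2)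
    (hκ : Fintype.card κ < finrank 𝕜 E * 2) (hd : ∀ t, d t ≠ 0)
    (horth : Pairwise fun s t => ⟪x s, x t⟫_𝕜 = 0 ∨ ⟪d s, d t⟫_𝕜 = 0) :
    Extendible 𝕜 x d := by
  have : FiniteDimensional 𝕜 E := finite_of_finrank_pos (by lia)
  have : Fact (finrank 𝕜 F = 1 + 1) := ⟨hF⟩
  have : Nontrivial F := nontrivial_of_finrank_eq_succ hF
  by_contra hext
  have hmem (t : κ) (f : F) : x t ⊗ₜ[𝕜] f ∈ span 𝕜 (Set.range fun t => x t ⊗ₜ[𝕜] d t) := by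
    have hL : finrank 𝕜 (𝕜 ∙ d t) = 1 := finrank_span_singleton (hd t)
    have hL' : finrank 𝕜 (𝕜 ∙ d t)ᗮ = 1 := finrank_orthogonal_span_singleton (hd t)
    exact tmul_mem_span_of_fiberSpan_le_orthogonal hd hL hL'
      (fiberSpan_le_orthogonal_of_not_extendible hd horth hext hL hL')
      (mem_fiberSpan (mem_span_singleton_self (d t))) f
  have hx : span 𝕜 (Set.range x) = ⊤ := not_ne_iff.1 (mt extendible_of_span_ne_top hext)
  have hcard : finrank 𝕜 (E ⊗[𝕜] F) ≤ Fintype.card κ := by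
    rw [← finrank_top, ← eq_top_of_tmul_mem hx (Set.forall_mem_range.2 hmem)]
    exact finrank_range_le_card _
  rw [finrank_tensorProduct, hF] at hcard
  exact hκ.not_ge hcard

end InnerProductSpace

section Coordinates

open scoped InnerProductSpace ComplexConjugate

variable {R 𝕜 α ι β κ : Type*} [RCLike 𝕜]

/-- The product vector with factors `u` and `w` for the grouping of the coordinates into two blocks
given by `e`, which reads off the index of each block. -/
def prodVec [Mul R] (e : α ≃ ι × β) (u : ι → R) (w : β → R) : α → R :=
  fun p => u (e p).1 * w (e p).2

theorem prodVec_ne_zero [MulZeroClass R] [NoZeroDivisors R] (e : α ≃ ι × β) {u : ι → R}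
    {w : β → R} (hu : u ≠ 0) (hw : w ≠ 0) : prodVec e u w ≠ 0 := by
  obtain ⟨i, hi⟩ := Function.ne_iff.1 hu
  obtain ⟨j, hj⟩ := Function.ne_iff.1 hw
  exact Function.ne_iff.2 ⟨e.symm (i, j), by simpa [prodVec] using ⟨hi, hj⟩⟩

theorem exists_prodVec_eq_right_ne_zero [MulZeroOneClass R] [Nontrivial R] [Nonempty β]
    (e : α ≃ ι × β) (u : ι → R) (w : β → R) :
    ∃ (u' : ι → R) (w' : β → R), w' ≠ 0 ∧ prodVec e u w = prodVec e u' w' := by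
  by_cases hw : w = 0
  · exact ⟨0, 1, one_ne_zero, by ext p; simp [prodVec, hw]⟩
  · exact ⟨u, w, hw, rfl⟩

theorem sum_conj_prodVec_mul_prodVec [Fintype α] [Fintype ι] [Fintype β] (e : α ≃ ι × β)
    (u u' : ι → 𝕜) (w w' : β → 𝕜) :
    ∑ p, conj (prodVec e u w p) * prodVec e u' w' p =
      ⟪WithLp.toLp 2 u, WithLp.toLp 2 u'⟫_𝕜 * ⟪WithLp.toLp 2 w, WithLp.toLp 2 w'⟫_𝕜 := by
  simp only [prodVec, PiLp.inner_apply, RCLike.inner_apply, map_mul, Fintype.sum_mul_sum,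
    ← Fintype.sum_prod_type']
  exact Fintype.sum_equiv e _ _ fun p => by ring

theorem stmt2_general [Fintype α] [Fintype β] [Fintype κ] (e : α ≃ ι × β)
    (hβ : Fintype.card β = 2) (hκ : Fintype.card κ < Fintype.card α) (v : κ → α → 𝕜)
    (hprod : ∀ t, ∃ u w, v t = prodVec e u w)
    (horth : ∀ s t, s ≠ t → ∑ p, conj (v s p) * v t p = 0) :
    ∃ u w, prodVec e u w ≠ 0 ∧ ∀ t, ∑ p, conj (v t p) * prodVec e u w p = 0 := by
  have : Nonempty β := Fintype.card_pos_iff.1 (by lia)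
  have : Finite ι := .of_surjective (fun p => (e p).1) (Prod.fst_surjective.comp e.surjective)
  have := Fintype.ofFinite ι
  have hprod' (t : κ) : ∃ u w, w ≠ 0 ∧ v t = prodVec e u w := by
    obtain ⟨u, w, h⟩ := hprod t
    exact h ▸ exists_prodVec_eq_right_ne_zero e u w
  choose x d hd hv using hprod'
  obtain rfl : v = fun t => prodVec e (x t) (d t) := funext hv
  simp only [sum_conj_prodVec_mul_prodVec, mul_eq_zero] at horth ⊢
  obtain ⟨u, hu, w, hw, h⟩ := extendible_of_card_lt (𝕜 := 𝕜) (x := fun t => WithLp.toLp 2 (x t))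
    (d := fun t => WithLp.toLp 2 (d t)) (by simpa using hβ)
    (by simpa [Fintype.card_congr e, hβ] using hκ) (by simpa using hd) horth
  exact ⟨u.ofLp, w.ofLp, prodVec_ne_zero e (by simpa using hu) (by simpa using hw), h⟩

end Coordinates

/-- The grouping `ABC:D` of the four tensor factors. -/
def groupABC : Q4 ≃ (Fin 2 × Fin 2 × Fin 2) × Fin 2 where
  toFun p := ((p.1, p.2.1, p.2.2.1), p.2.2.2)
  invFun q := (q.1.1, q.1.2.1, q.1.2.2, q.2)

theorem IsProdABCD.exists_eq_prodVec_groupABC {v : Q4 → ℂ} (hv : IsProdABCD v) :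
    ∃ u w, v = prodVec groupABC u w := by
  obtain ⟨a, b, c, d, rfl⟩ := hv
  exact ⟨fun i => a i.1 * b i.2.1 * c i.2.2, d, rfl⟩

/-- Any family of fewer than `16` nonzero pairwise orthogonal 4-qubit product
vectors admits a nonzero `ABC:D` product vector orthogonal to all of them;
in particular no 4-qubit UPB remains a UPB in the coarse graining `ℂ⁸ ⊗ ℂ²`. -/
theorem stmt2 (n : ℕ) (hn : n < 16) (v : Fin n → Q4 → ℂ)
    (hprod : ∀ t, IsProdABCD (v t)) (hnz : ∀ t, v t ≠ 0)
    (horth : ∀ s t, s ≠ t → ip (v s) (v t) = 0) :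
    ∃ (u : Fin 2 × Fin 2 × Fin 2 → ℂ) (w : Fin 2 → ℂ),
      (fun p : Q4 => u (p.1, p.2.1, p.2.2.1) * w p.2.2.2) ≠ 0 ∧
      ∀ t, ip (v t) (fun p : Q4 => u (p.1, p.2.1, p.2.2.1) * w p.2.2.2) = 0 :=
  stmt2_general groupABC (Fintype.card_fin 2) (by simpa using hn) v
    (fun t => (hprod t).exists_eq_prodVec_groupABC) horth
end

section
/- Let v_j = |f_j, g_j, h_j, i_j⟩, j = 1,…,n (n ≥ 4), be 4-qubit product vectors with all f_j, g_j, h_j, i_j : Fin 2 → ℂ nonzero, and let m be an integer with 0 ≤ m ≤ n−4. Suppose (i) there is an integer k with 1 ≤ k ≤ n−3−m such that f_1 = f_2 = … = f_k and g_{k+1} = … = g_{n−3−m}, and (ii) there is a subset J ⊆ {n−2−m, …, n} of cardinality m+1 such that the vectors (k,l) ↦ h_j k · i_j l for j ∈ J are pairwise linearly dependent. Then there exists a nonzero A:B:CD product vector orthogonal to every v_j; in particular the family is not a UPB for the A:B:CD grouping. -/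
/-- The 4-qubit product vector `|x,y,z,w⟩`. -/
def pv (x y z w : Fin 2 → ℂ) : Q4 → ℂ := fun p => x p.1 * y p.2.1 * z p.2.2.1 * w p.2.2.2

section FinrankImage

open Finset Module

variable {K V ι : Type*} [DivisionRing K] [AddCommGroup V] [Module K V]

lemma finrank_image_le_one_of_forall_eq_smul {v : ι → V} {s : Set ι}
    (h : ∀ j ∈ s, ∀ j' ∈ s, ∃ c : K, v j = c • v j') : (v '' s).finrank K ≤ 1 := by
  obtain rfl | ⟨j₀, hj₀⟩ := s.eq_empty_or_nonempty
  · simp [Set.finrank_empty]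
  have hle : Submodule.span K (v '' s) ≤ Submodule.span K {v j₀} := by
    rw [Submodule.span_le, Set.image_subset_iff]
    intro j hj
    obtain ⟨c, hc⟩ := h j hj j₀ hj₀
    exact Submodule.mem_span_singleton.mpr ⟨c, hc.symm⟩
  calc (v '' s).finrank K ≤ finrank K (Submodule.span K {v j₀}) := Submodule.finrank_mono hle
    _ ≤ 1 := by simpa using finrank_span_le_card (R := K) {v j₀}

lemma finrank_image_le_card_sdiff_add [DecidableEq ι] (v : ι → V) (s t : Finset ι) :
    (v '' s).finrank K ≤ #(s \ t) + (v '' t).finrank K := by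
  classical
  rw [← coe_image, ← coe_image, Set.finrank, Set.finrank]
  have hspan : Submodule.span K (s.image v : Set V) ≤
      Submodule.span K ((s \ t).image v : Set V) ⊔ Submodule.span K (t.image v : Set V) := by
    rw [← Submodule.span_union, ← coe_union, ← image_union, sdiff_union_self_eq_union]
    exact Submodule.span_mono (coe_subset.mpr (image_mono v subset_union_left))
  have hsdiff : finrank K (Submodule.span K ((s \ t).image v : Set V)) ≤ #(s \ t) :=
    (finrank_span_finset_le_card _).trans card_image_le
  calc finrank K (Submodule.span K (s.image v : Set V))
    _ ≤ finrank K ↥(Submodule.span K ((s \ t).image v : Set V) ⊔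
          Submodule.span K (t.image v : Set V)) := Submodule.finrank_mono hspan
    _ ≤ finrank K (Submodule.span K ((s \ t).image v : Set V)) +
          finrank K (Submodule.span K (t.image v : Set V)) :=
      Submodule.finrank_add_le_finrank_add_finrank _ _
    _ ≤ #(s \ t) + finrank K (Submodule.span K (t.image v : Set V)) := by gcongr

end FinrankImage

section ProductVector

variable {R α β γ : Type*}

/-- The product vector `x ⊗ y ⊗ u` of a tripartite system, as a function on `α × β × γ`. For
`α = β = Fin 2` and `γ = Fin 2 × Fin 2` the index type is `Q4` by definition, and these are the
`A:B:CD` product vectors. -/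
def productVector [Mul R] (x : α → R) (y : β → R) (u : γ → R) : α × β × γ → R :=
  fun p => x p.1 * y p.2.1 * u p.2.2

lemma productVector_ne_zero [MulZeroClass R] [NoZeroDivisors R] {x : α → R} {y : β → R} {u : γ → R}
    (hx : x ≠ 0) (hy : y ≠ 0) (hu : u ≠ 0) : productVector x y u ≠ 0 := by
  obtain ⟨r, hr⟩ := Function.ne_iff.mp hx
  obtain ⟨s, hs⟩ := Function.ne_iff.mp hy
  obtain ⟨t, ht⟩ := Function.ne_iff.mp hu
  exact Function.ne_iff.mpr ⟨(r, s, t), mul_ne_zero (mul_ne_zero hr hs) ht⟩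

lemma star_productVector_dotProduct [CommSemiring R] [StarRing R] [Fintype α] [Fintype β]
    [Fintype γ] (x a : α → R) (y b : β → R) (u w : γ → R) :
    star (productVector x y u) ⬝ᵥ productVector a b w =
      (star x ⬝ᵥ a) * (star y ⬝ᵥ b) * (star u ⬝ᵥ w) := by
  simp only [dotProduct, productVector, Pi.star_apply, star_mul', Fintype.sum_prod_type]
  rw [mul_assoc, Fintype.sum_mul_sum, Fintype.sum_mul_sum]
  simp only [Finset.mul_sum]
  congr! 3
  ring

end ProductVector

section Orthogonality

open Finset Matrix Module

variable {𝕜 α β γ ι : Type*} [Field 𝕜] [StarRing 𝕜] [Fintype α] [Fintype β] [Fintype γ]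

lemma exists_ne_zero_star_dotProduct_eq_zero {S : Set (α → 𝕜)}
    (hS : S.finrank 𝕜 < Fintype.card α) : ∃ a : α → 𝕜, a ≠ 0 ∧ ∀ v ∈ S, star v ⬝ᵥ a = 0 := by
  classical
  have hlt : Submodule.span 𝕜 S < ⊤ :=
    Submodule.lt_top_of_finrank_lt_finrank (by rwa [finrank_fintype_fun_eq_card])
  obtain ⟨φ, hφ, hker⟩ := Submodule.exists_le_ker_of_lt_top _ hlt
  obtain ⟨c, rfl⟩ := (dotProductEquiv 𝕜 α).surjective φ
  refine ⟨star c, star_ne_zero.mpr fun hc => hφ (by simp [hc]), fun v hv => ?_⟩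
  have hcv : c ⬝ᵥ v = 0 := hker (Submodule.subset_span hv)
  rw [star_dotProduct_star, hcv, star_zero]

theorem exists_productVector_orthogonal_of_finrank_lt {x : ι → α → 𝕜} {y : ι → β → 𝕜}
    {u : ι → γ → 𝕜} {P Q R : Set ι} (hP : (x '' P).finrank 𝕜 < Fintype.card α)
    (hQ : (y '' Q).finrank 𝕜 < Fintype.card β) (hR : (u '' R).finrank 𝕜 < Fintype.card γ) :
    ∃ a b w, productVector a b w ≠ 0 ∧
      ∀ j ∈ P ∪ Q ∪ R, star (productVector (x j) (y j) (u j)) ⬝ᵥ productVector a b w = 0 := by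
  obtain ⟨a, ha, hxa⟩ := exists_ne_zero_star_dotProduct_eq_zero hP
  obtain ⟨b, hb, hyb⟩ := exists_ne_zero_star_dotProduct_eq_zero hQ
  obtain ⟨w, hw, huw⟩ := exists_ne_zero_star_dotProduct_eq_zero hR
  refine ⟨a, b, w, productVector_ne_zero ha hb hw, fun j hj => ?_⟩
  rw [star_productVector_dotProduct]
  rcases hj with (hj | hj) | hj
  · rw [hxa _ (Set.mem_image_of_mem x hj), zero_mul, zero_mul]
  · rw [hyb _ (Set.mem_image_of_mem y hj), mul_zero, zero_mul]
  · rw [huw _ (Set.mem_image_of_mem u hj), mul_zero]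

theorem stmt3_general [Nontrivial α] [Nontrivial β] {f : ℕ → α → 𝕜} {g : ℕ → β → 𝕜}
    {u : ℕ → γ → 𝕜} {n k r : ℕ} {J : Finset ℕ} (hr : r ≤ n)
    (hf : ∀ j, 1 ≤ j → j ≤ k → f j = f 1)
    (hg : ∀ j, k + 1 ≤ j → j ≤ r → g j = g (k + 1))
    (hJ : J ⊆ Icc (r + 1) n) (hcard : n + 1 < r + #J + Fintype.card γ)
    (hu : ∀ j ∈ J, ∀ j' ∈ J, ∃ μ : 𝕜, u j = μ • u j') :
    ∃ a b w, productVector a b w ≠ 0 ∧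
      ∀ j ∈ Icc 1 n, star (productVector (f j) (g j) (u j)) ⬝ᵥ productVector a b w = 0 := by
  have hA : (f '' Set.Icc 1 k).finrank 𝕜 ≤ 1 :=
    finrank_image_le_one_of_forall_eq_smul fun j hj j' hj' =>
      ⟨1, by rw [one_smul, hf j hj.1 hj.2, hf j' hj'.1 hj'.2]⟩
  have hB : (g '' Set.Icc (k + 1) r).finrank 𝕜 ≤ 1 :=
    finrank_image_le_one_of_forall_eq_smul fun j hj j' hj' =>
      ⟨1, by rw [one_smul, hg j hj.1 hj.2, hg j' hj'.1 hj'.2]⟩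
  have hCD : (u '' Icc (r + 1) n).finrank 𝕜 < Fintype.card γ := by
    have hline : (u '' J).finrank 𝕜 ≤ 1 := finrank_image_le_one_of_forall_eq_smul hu
    have hsdiff : #(Icc (r + 1) n \ J) + #J = n - r := by
      rw [card_sdiff_add_card_eq_card hJ, Nat.card_Icc, Nat.add_sub_add_right]
    have hspan := finrank_image_le_card_sdiff_add (K := 𝕜) u (Icc (r + 1) n) J
    omega
  obtain ⟨a, b, w, hne, horth⟩ := exists_productVector_orthogonal_of_finrank_lt
    (hA.trans_lt Fintype.one_lt_card) (hB.trans_lt Fintype.one_lt_card) hCD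
  refine ⟨a, b, w, hne, fun j hj => horth j ?_⟩
  simp only [Set.mem_union, Set.mem_Icc, coe_Icc, mem_Icc] at hj ⊢
  omega

end Orthogonality

lemma pv_eq_productVector (x y z t : Fin 2 → ℂ) :
    pv x y z t = productVector x y fun p : Fin 2 × Fin 2 => z p.1 * t p.2 :=
  funext fun _ => mul_assoc _ _ _

lemma ip_eq_star_dotProduct (v w : Q4 → ℂ) : ip v w = star v ⬝ᵥ w := rfl

/-- Lemma `le:n-3of2*2*4` of the paper: under conditions (i) and (ii) the family
`v_j = |f_j, g_j, h_j, i_j⟩`, `j = 1, …, n`, is not a UPB for the `A:B:CD` grouping: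
there is a nonzero `A:B:CD` product vector orthogonal to every `v_j`. -/
theorem stmt3 (n m : ℕ) (hn : 4 ≤ n) (hm : m + 4 ≤ n)
    (f g h i : ℕ → Fin 2 → ℂ)
    (hnz : ∀ j ∈ Finset.Icc 1 n, f j ≠ 0 ∧ g j ≠ 0 ∧ h j ≠ 0 ∧ i j ≠ 0)
    -- condition (i)
    (hi : ∃ k, 1 ≤ k ∧ k ≤ n - 3 - m ∧
      (∀ j, 1 ≤ j → j ≤ k → f j = f 1) ∧
      (∀ j, k + 1 ≤ j → j ≤ n - 3 - m → g j = g (k + 1)))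
    -- condition (ii): `m+1` pairwise linearly dependent CD-parts among the last `m+3`
    (hii : ∃ J : Finset ℕ, J ⊆ Finset.Icc (n - 2 - m) n ∧ J.card = m + 1 ∧
      ∀ j ∈ J, ∀ j' ∈ J, ∃ μ : ℂ,
        (fun p : Fin 2 × Fin 2 => h j p.1 * i j p.2) =
          μ • fun p : Fin 2 × Fin 2 => h j' p.1 * i j' p.2) :
    ∃ (a b : Fin 2 → ℂ) (w : Fin 2 × Fin 2 → ℂ),
      (fun p : Q4 => a p.1 * b p.2.1 * w (p.2.2.1, p.2.2.2)) ≠ 0 ∧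
      ∀ j ∈ Finset.Icc 1 n,
        ip (pv (f j) (g j) (h j) (i j))
          (fun p : Q4 => a p.1 * b p.2.1 * w (p.2.2.1, p.2.2.2)) = 0 := by
  obtain ⟨k, -, -, hf, hg⟩ := hi
  obtain ⟨J, hJ, hJcard, hdep⟩ := hii
  simp only [pv_eq_productVector, ip_eq_star_dotProduct]
  have hstart : n - 2 - m = n - 3 - m + 1 := by omega
  rw [hstart] at hJ
  exact stmt3_general (by omega) hf hg hJ
    (by rw [hJcard, Fintype.card_prod, Fintype.card_fin]; omega) hdep
end

section
/- For all α, β ∈ (0, π/2) with α ≠ β, the family S₆, regarded under the AB:C:D grouping, is a UPB: every AB:C:D product vector (i.e., every v with v (i,j,k,l) = u (i,j) · c k · d l for some u : Fin 2 × Fin 2 → ℂ and c,d : Fin 2 → ℂ) orthogonal to all six members of S₆ is the zero vector. -/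
/-- `|0⟩`. -/
def ket0 : Fin 2 → ℂ := ![1, 0]

/-- `|1⟩`. -/
def ket1 : Fin 2 → ℂ := ![0, 1]

/-- `(cos t, sin t)` as a qubit state. -/
noncomputable def vk (t : ℝ) : Fin 2 → ℂ := ![(Real.cos t : ℂ), (Real.sin t : ℂ)]

/-- `(sin t, −cos t)` as a qubit state, orthogonal to `vk t`. -/
noncomputable def vk' (t : ℝ) : Fin 2 → ℂ := ![(Real.sin t : ℂ), -(Real.cos t : ℂ)]

/-- The unique 4-qubit UPB of size 6:
`{|0,0,0,0⟩, |0,a,a,1⟩, |1,0,b,a⟩, |1,a,b',b⟩, |a,1,a',b'⟩, |a',a',1,a'⟩}`. -/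
noncomputable def S6 (α β : ℝ) : Fin 6 → Q4 → ℂ :=
  ![pv ket0 ket0 ket0 ket0,
    pv ket0 (vk α) (vk α) ket1,
    pv ket1 ket0 (vk β) (vk α),
    pv ket1 (vk α) (vk' β) (vk β),
    pv (vk α) ket1 (vk' α) (vk' β),
    pv (vk' α) (vk' α) ket1 (vk' α)]

/-!
A product vector is orthogonal to a product vector exactly when this happens in one of the factors.
In `S₆` the local vectors of each of the parties AB, C, D are in general position: a nonzero vector
of the local space `ℂᵈ` is orthogonal to at most `d - 1` of them. A nonzero product vector is
therefore orthogonal to at most `3 + 1 + 1 < 6` members.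

All the qubit states involved are `vk θ` with `-π/2 < θ ≤ π/2`, so they are parallel only when their
angles agree; this settles C and D. For AB, split `u` into its rows `u (0, ·)` and `u (1, ·)`. If
both relations on one row (with `0` and with `a`) hold, that row vanishes, and two further relations
annihilate the other. Otherwise each row `r` is orthogonal to `0` or to `a`, which forces
`⟨a', r⟩ = -k ⟨1, r⟩` with `k > 0`. The members `|a,1⟩` and `|a',a'⟩` then give a linear system
whose determinant is a sum of positive terms.
-/

lemma eq_zero_and_eq_zero_of_det_ne_zero {R : Type*} [CommRing R] [NoZeroDivisors R]
    {a b c d x y : R} (hdet : a * d - b * c ≠ 0) (h₁ : a * x + b * y = 0)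
    (h₂ : c * x + d * y = 0) : x = 0 ∧ y = 0 := by
  constructor
  · refine (mul_eq_zero.mp ?_).resolve_left hdet
    linear_combination d * h₁ - b * h₂
  · refine (mul_eq_zero.mp ?_).resolve_left hdet
    linear_combination a * h₂ - c * h₁

section GeneralPosition

open Finset

lemma card_le_sum_card_eq_zero {σ ι M : Type*} [Fintype σ] [Fintype ι] [CommMonoidWithZero M]
    [NoZeroDivisors M] [Nontrivial M] [DecidableEq M] (f : σ → ι → M)
    (h : ∀ i, ∏ s, f s i = 0) : Fintype.card ι ≤ ∑ s, #{i | f s i = 0} := by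
  classical
  have hcover : (univ : Finset ι) = univ.biUnion fun s => {i | f s i = 0} := by
    ext i
    simpa [Finset.prod_eq_zero_iff] using h i
  calc Fintype.card ι = #(univ.biUnion fun s => {i | f s i = 0}) := by rw [← hcover, card_univ]
    _ ≤ ∑ s, #{i | f s i = 0} := card_biUnion_le

variable {ι κ κ₁ κ₂ κ₃ R : Type*} [Fintype ι] [Fintype κ] [Fintype κ₁] [Fintype κ₂] [Fintype κ₃]
  [CommSemiring R] [StarRing R] [DecidableEq R]

/-- A finite family of vectors is in general position if every nonzero vector is orthogonal to fewer
than `card κ` of its members. Over a field this says that any `card κ` members form a basis; the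
dual form is the one that product vectors are tested against. -/
def InGeneralPosition (v : ι → κ → R) : Prop :=
  ∀ ⦃x : κ → R⦄, x ≠ 0 → #{i | star (v i) ⬝ᵥ x = 0} < Fintype.card κ

theorem InGeneralPosition.eq_zero_or_eq_zero_or_eq_zero [NoZeroDivisors R] [Nontrivial R]
    {v₁ : ι → κ₁ → R} {v₂ : ι → κ₂ → R} {v₃ : ι → κ₃ → R}
    (h₁ : InGeneralPosition v₁) (h₂ : InGeneralPosition v₂) (h₃ : InGeneralPosition v₃)
    (hcard : Fintype.card κ₁ + Fintype.card κ₂ + Fintype.card κ₃ < Fintype.card ι + 3)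
    {x₁ : κ₁ → R} {x₂ : κ₂ → R} {x₃ : κ₃ → R}
    (horth : ∀ i, (star (v₁ i) ⬝ᵥ x₁) * (star (v₂ i) ⬝ᵥ x₂) * (star (v₃ i) ⬝ᵥ x₃) = 0) :
    x₁ = 0 ∨ x₂ = 0 ∨ x₃ = 0 := by
  by_contra! hne
  have hcount : Fintype.card ι ≤ #{i | star (v₁ i) ⬝ᵥ x₁ = 0} + #{i | star (v₂ i) ⬝ᵥ x₂ = 0} +
      #{i | star (v₃ i) ⬝ᵥ x₃ = 0} := by
    have h := card_le_sum_card_eq_zero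
      ![fun i => star (v₁ i) ⬝ᵥ x₁, fun i => star (v₂ i) ⬝ᵥ x₂, fun i => star (v₃ i) ⬝ᵥ x₃]
      fun i => (Fin.prod_univ_three _).trans (horth i)
    exact h.trans_eq (Fin.sum_univ_three _)
  have := h₁ hne.1
  have := h₂ hne.2.1
  have := h₃ hne.2.2
  omega

end GeneralPosition

section TensorVec

variable {κ κ' R : Type*}

/-- The product vector `x ⊗ y` of two parties, in coordinates. -/
def tensorVec [Mul R] (x : κ → R) (y : κ' → R) : κ × κ' → R := fun p => x p.1 * y p.2

lemma star_tensorVec_dotProduct [Fintype κ] [Fintype κ'] [CommSemiring R] [StarRing R]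
    (x : κ → R) (y : κ' → R) (u : κ × κ' → R) :
    star (tensorVec x y) ⬝ᵥ u = ∑ i, star (x i) * (star y ⬝ᵥ fun j => u (i, j)) := by
  simp only [dotProduct, tensorVec, Fintype.sum_prod_type, Finset.mul_sum, Pi.star_apply,
    star_mul', mul_assoc]

lemma ip_pv_eq_mul (x y z w c d : Fin 2 → ℂ) (u : Fin 2 × Fin 2 → ℂ) :
    ip (pv x y z w) (fun p => u (p.1, p.2.1) * c p.2.2.1 * d p.2.2.2) =
      (star (tensorVec x y) ⬝ᵥ u) * (star z ⬝ᵥ c) * (star w ⬝ᵥ d) := by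
  simp only [ip, pv, tensorVec, dotProduct, Fintype.sum_prod_type, Fin.sum_univ_two, map_mul,
    Pi.star_apply, star_mul', starRingEnd_apply]
  ring

end TensorVec

section Qubit

open Real Set

lemma vk_zero : vk 0 = ket0 := by simp [vk, ket0]

lemma vk_pi_div_two : vk (π / 2) = ket1 := by simp [vk, ket1]

lemma vk_sub_pi_div_two (t : ℝ) : vk (t - π / 2) = vk' t := by
  simp only [vk, vk', cos_sub_pi_div_two, sin_sub_pi_div_two, Complex.ofReal_neg]

lemma star_vk_dotProduct (t : ℝ) (x : Fin 2 → ℂ) :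
    star (vk t) ⬝ᵥ x = (cos t : ℂ) * x 0 + (sin t : ℂ) * x 1 := by
  simp [vk, dotProduct, -Complex.ofReal_cos, -Complex.ofReal_sin]

lemma sin_sub_ne_zero_of_mem_Ioc {s t : ℝ} (hs : s ∈ Ioc (-(π / 2)) (π / 2))
    (ht : t ∈ Ioc (-(π / 2)) (π / 2)) (hst : s ≠ t) : sin (t - s) ≠ 0 := by
  rw [Ne, sin_eq_zero_iff_of_lt_of_lt (by linarith [hs.2, ht.1]) (by linarith [hs.1, ht.2]),
    sub_eq_zero]
  exact hst.symm

lemma eq_zero_of_star_vk_dotProduct_eq_zero {s t : ℝ} (hst : sin (t - s) ≠ 0) {x : Fin 2 → ℂ}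
    (hs : star (vk s) ⬝ᵥ x = 0) (ht : star (vk t) ⬝ᵥ x = 0) : x = 0 := by
  rw [star_vk_dotProduct] at hs ht
  have hdet : (cos s * sin t - sin s * cos t : ℂ) ≠ 0 := by
    rw [sin_sub] at hst
    exact_mod_cast fun h => hst (by linear_combination h)
  obtain ⟨h0, h1⟩ := eq_zero_and_eq_zero_of_det_ne_zero hdet hs ht
  funext i
  fin_cases i
  exacts [h0, h1]

lemma eq_zero_of_orthogonal_vk_of_two_le_card {ι : Type*} {θ : ι → ℝ} {K : Finset ι}
    (hθ : InjOn θ K) (hmem : ∀ i, θ i ∈ Ioc (-(π / 2)) (π / 2)) (hK : 2 ≤ K.card) {x : Fin 2 → ℂ}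
    (hx : ∀ i ∈ K, star (vk (θ i)) ⬝ᵥ x = 0) : x = 0 := by
  obtain ⟨i, hi, j, hj, hij⟩ := Finset.one_lt_card.mp hK
  exact eq_zero_of_star_vk_dotProduct_eq_zero
    (sin_sub_ne_zero_of_mem_Ioc (hmem i) (hmem j) (hθ.ne hi hj hij)) (hx i hi) (hx j hj)

lemma inGeneralPosition_vk {ι : Type*} [Fintype ι] {θ : ι → ℝ} (hθ : Function.Injective θ)
    (hmem : ∀ i, θ i ∈ Ioc (-(π / 2)) (π / 2)) : InGeneralPosition fun i => vk (θ i) := by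
  intro x hx
  rw [Fintype.card_fin]
  by_contra! hcard
  exact hx (eq_zero_of_orthogonal_vk_of_two_le_card hθ.injOn hmem hcard
    fun i hi => (Finset.mem_filter_univ i).mp hi)

lemma star_tensorVec_vk_dotProduct (s : ℝ) (y : Fin 2 → ℂ) (u : Fin 2 × Fin 2 → ℂ) :
    star (tensorVec (vk s) y) ⬝ᵥ u =
      (cos s : ℂ) * (star y ⬝ᵥ fun j => u (0, j)) +
        (sin s : ℂ) * (star y ⬝ᵥ fun j => u (1, j)) := by
  rw [star_tensorVec_dotProduct, Fin.sum_univ_two]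
  simp [vk, -Complex.ofReal_cos, -Complex.ofReal_sin]

end Qubit

section Angles

open Real Set

/-- The angles `θ` for which the A-components of `S6 α β` are the states `vk θ`. -/
noncomputable def angleA (α : ℝ) : Fin 6 → ℝ := ![0, 0, π / 2, π / 2, α, α - π / 2]

/-- The angles `θ` for which the B-components of `S6 α β` are the states `vk θ`. -/
noncomputable def angleB (α : ℝ) : Fin 6 → ℝ := ![0, α, 0, α, π / 2, α - π / 2]

/-- The angles `θ` for which the C-components of `S6 α β` are the states `vk θ`. -/
noncomputable def angleC (α β : ℝ) : Fin 6 → ℝ := ![0, α, β, β - π / 2, α - π / 2, π / 2]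

/-- The angles `θ` for which the D-components of `S6 α β` are the states `vk θ`. -/
noncomputable def angleD (α β : ℝ) : Fin 6 → ℝ := ![0, π / 2, α, β, β - π / 2, α - π / 2]

lemma S6_eq_pv_vk (α β : ℝ) (i : Fin 6) :
    S6 α β i = pv (vk (angleA α i)) (vk (angleB α i)) (vk (angleC α β i)) (vk (angleD α β i)) := by
  fin_cases i <;>
    simp [S6, angleA, angleB, angleC, angleD, vk_zero, vk_pi_div_two, vk_sub_pi_div_two]

lemma angleD_eq_angleC_comp (α β : ℝ) : angleD α β = angleC α β ∘ ![0, 5, 1, 2, 3, 4] := by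
  funext i
  fin_cases i <;> rfl

variable {α β : ℝ}

lemma angleC_mem_Ioc (hα : α ∈ Ioo 0 (π / 2)) (hβ : β ∈ Ioo 0 (π / 2)) (i : Fin 6) :
    angleC α β i ∈ Ioc (-(π / 2)) (π / 2) := by
  obtain ⟨hα₀, hα₁⟩ := hα
  obtain ⟨hβ₀, hβ₁⟩ := hβ
  fin_cases i <;> simp only [angleC, mem_Ioc] <;> constructor <;> simp <;> linarith

lemma angleC_injective (hα : α ∈ Ioo 0 (π / 2)) (hβ : β ∈ Ioo 0 (π / 2)) (hαβ : α ≠ β) :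
    Function.Injective (angleC α β) := by
  obtain ⟨hα₀, hα₁⟩ := hα
  obtain ⟨hβ₀, hβ₁⟩ := hβ
  intro i j hij
  fin_cases i <;> fin_cases j <;> simp [angleC] at hij ⊢ <;> grind

lemma inGeneralPosition_vk_angleC (hα : α ∈ Ioo 0 (π / 2)) (hβ : β ∈ Ioo 0 (π / 2))
    (hαβ : α ≠ β) : InGeneralPosition fun i => vk (angleC α β i) :=
  inGeneralPosition_vk (angleC_injective hα hβ hαβ) (angleC_mem_Ioc hα hβ)

lemma inGeneralPosition_vk_angleD (hα : α ∈ Ioo 0 (π / 2)) (hβ : β ∈ Ioo 0 (π / 2))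
    (hαβ : α ≠ β) : InGeneralPosition fun i => vk (angleD α β i) := by
  rw [angleD_eq_angleC_comp]
  exact inGeneralPosition_vk ((angleC_injective hα hβ hαβ).comp (by decide))
    fun i => angleC_mem_Ioc hα hβ _

end Angles

section PartyAB

open Real Set

/-- The AB-components `|0,0⟩, |0,a⟩, |1,0⟩, |1,a⟩, |a,1⟩, |a',a'⟩` of the members of `S6 α β`. -/
noncomputable def vecAB (α : ℝ) (i : Fin 6) : Fin 2 × Fin 2 → ℂ :=
  tensorVec (vk (angleA α i)) (vk (angleB α i))

variable {α : ℝ}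

lemma angleB_mem_Ioc (hα : α ∈ Ioo 0 (π / 2)) (i : Fin 6) :
    angleB α i ∈ Ioc (-(π / 2)) (π / 2) := by
  obtain ⟨hα₀, hα₁⟩ := hα
  fin_cases i <;> simp only [angleB, mem_Ioc] <;> constructor <;> simp <;> linarith

lemma angleB_injOn_compl_zero_one (hα : α ∈ Ioo 0 (π / 2)) :
    InjOn (angleB α) (({0, 1} : Finset (Fin 6)) : Set (Fin 6))ᶜ := by
  obtain ⟨hα₀, hα₁⟩ := hα
  intro i hi j hj hij
  fin_cases i <;> fin_cases j <;> simp [angleB] at hi hj hij ⊢ <;> linarith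

lemma angleB_injOn_compl_two_three (hα : α ∈ Ioo 0 (π / 2)) :
    InjOn (angleB α) (({2, 3} : Finset (Fin 6)) : Set (Fin 6))ᶜ := by
  obtain ⟨hα₀, hα₁⟩ := hα
  intro i hi j hj hij
  fin_cases i <;> fin_cases j <;> simp [angleB] at hi hj hij ⊢ <;> linarith

lemma sin_angleA_ne_zero (hcos : cos α ≠ 0) (hsin : sin α ≠ 0) {i : Fin 6}
    (hi : i ∉ ({0, 1} : Finset (Fin 6))) : sin (angleA α i) ≠ 0 := by
  fin_cases i <;> simp [angleA, sin_sub_pi_div_two, hcos, hsin] at hi ⊢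

lemma cos_angleA_ne_zero (hcos : cos α ≠ 0) (hsin : sin α ≠ 0) {i : Fin 6}
    (hi : i ∉ ({2, 3} : Finset (Fin 6))) : cos (angleA α i) ≠ 0 := by
  fin_cases i <;> simp [angleA, cos_sub_pi_div_two, hcos, hsin] at hi ⊢

lemma sin_angleA_eq_zero (α : ℝ) {i : Fin 6} (hi : i ∈ ({0, 1} : Finset (Fin 6))) :
    sin (angleA α i) = 0 := by
  fin_cases i <;> simp [angleA] at hi ⊢

lemma cos_angleA_eq_zero (α : ℝ) {i : Fin 6} (hi : i ∈ ({2, 3} : Finset (Fin 6))) :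
    cos (angleA α i) = 0 := by
  fin_cases i <;> simp [angleA] at hi ⊢

lemma exists_overlap_eq_neg_mul (hcos : 0 < cos α) {r : Fin 2 → ℂ}
    (hr : star (vk 0) ⬝ᵥ r = 0 ∨ star (vk α) ⬝ᵥ r = 0) :
    ∃ k : ℝ, 0 < k ∧ star (vk (α - π / 2)) ⬝ᵥ r = -k * (star (vk (π / 2)) ⬝ᵥ r) := by
  have hcos' : (cos α : ℂ) ≠ 0 := by exact_mod_cast hcos.ne'
  have hpyth : (cos α : ℂ) ^ 2 + (sin α : ℂ) ^ 2 = 1 := by exact_mod_cast cos_sq_add_sin_sq α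
  simp only [star_vk_dotProduct, cos_sub_pi_div_two, sin_sub_pi_div_two, cos_zero, sin_zero,
    cos_pi_div_two, sin_pi_div_two, Complex.ofReal_neg, Complex.ofReal_zero, Complex.ofReal_one,
    zero_mul, one_mul, add_zero, zero_add] at hr ⊢
  rcases hr with hr | hr
  · exact ⟨cos α, hcos, by linear_combination (sin α : ℂ) * hr⟩
  · refine ⟨(cos α)⁻¹, inv_pos.mpr hcos, ?_⟩
    rw [Complex.ofReal_inv]
    field_simp
    linear_combination (sin α : ℂ) * hr - r 1 * hpyth

lemma eq_zero_and_eq_zero_of_rotated_overlaps {γ : ℝ} (hcos : cos γ ≠ 0) {k₀ k₁ : ℝ}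
    (hk₀ : 0 < k₀) (hk₁ : 0 < k₁) {y₀ y₁ : ℂ}
    (h : (cos γ : ℂ) * y₀ + (sin γ : ℂ) * y₁ = 0)
    (h' : (sin γ : ℂ) * (-k₀ * y₀) - (cos γ : ℂ) * (-k₁ * y₁) = 0) : y₀ = 0 ∧ y₁ = 0 := by
  have hdet : (cos γ * (cos γ * k₁) - sin γ * (-(sin γ * k₀)) : ℂ) ≠ 0 := by
    have hpos : 0 < cos γ ^ 2 * k₁ + sin γ ^ 2 * k₀ := by positivity
    exact_mod_cast fun h₀ => hpos.ne' (by linear_combination h₀)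
  exact eq_zero_and_eq_zero_of_det_ne_zero hdet h (by linear_combination h')

lemma subset_or_subset_or_mem_of_four_le_card : ∀ K : Finset (Fin 6), 4 ≤ K.card →
    {0, 1} ⊆ K ∨ {2, 3} ⊆ K ∨ ((0 ∈ K ∨ 1 ∈ K) ∧ (2 ∈ K ∨ 3 ∈ K) ∧ 4 ∈ K ∧ 5 ∈ K) := by
  decide

lemma rows_eq_zero_of_subset {ι : Type*} {θ : ι → ℝ} {P Q K : Finset ι} {p q : ι → ℝ}
    {r r' : Fin 2 → ℂ} (hmem : ∀ i, θ i ∈ Ioc (-(π / 2)) (π / 2)) (hPQ : Disjoint P Q)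
    (hP : P.card = 2) (hPK : P ⊆ K) (hK : 4 ≤ K.card) (hinjP : InjOn θ (P : Set ι)ᶜ)
    (hinjQ : InjOn θ (Q : Set ι)ᶜ) (hp : ∀ i ∉ Q, p i ≠ 0) (hq₀ : ∀ i ∈ P, q i = 0)
    (hq : ∀ i ∉ P, q i ≠ 0)
    (h : ∀ i ∈ K, (p i : ℂ) * (star (vk (θ i)) ⬝ᵥ r) + (q i : ℂ) * (star (vk (θ i)) ⬝ᵥ r') = 0) :
    r = 0 ∧ r' = 0 := by
  classical
  have hPQc : (P : Set ι) ⊆ (Q : Set ι)ᶜ := fun i hi => Finset.disjoint_left.mp hPQ hi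
  have hr : r = 0 := by
    refine eq_zero_of_orthogonal_vk_of_two_le_card (hinjQ.mono hPQc) hmem hP.ge fun i hi => ?_
    have hi' := h i (hPK hi)
    rw [hq₀ i hi, Complex.ofReal_zero, zero_mul, add_zero] at hi'
    exact (mul_eq_zero.mp hi').resolve_left (by exact_mod_cast hp i (hPQc hi))
  have hinj : InjOn θ (K \ P : Finset ι) := hinjP.mono fun i hi => (Finset.mem_sdiff.mp hi).2
  have hcard : 2 ≤ (K \ P).card := by
    rw [Finset.card_sdiff_of_subset hPK]
    omega
  refine ⟨hr, eq_zero_of_orthogonal_vk_of_two_le_card hinj hmem hcard fun i hi => ?_⟩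
  obtain ⟨hiK, hiP⟩ := Finset.mem_sdiff.mp hi
  have hi' := h i hiK
  rw [hr, dotProduct_zero, mul_zero, zero_add] at hi'
  exact (mul_eq_zero.mp hi').resolve_left (by exact_mod_cast hq i hiP)

lemma rows_eq_zero_of_transversal (hcos : 0 < cos α) (hsin : sin α ≠ 0) {γ : ℝ}
    (hγ : cos γ ≠ 0) {r₀ r₁ : Fin 2 → ℂ}
    (h₀ : star (vk 0) ⬝ᵥ r₀ = 0 ∨ star (vk α) ⬝ᵥ r₀ = 0)
    (h₁ : star (vk 0) ⬝ᵥ r₁ = 0 ∨ star (vk α) ⬝ᵥ r₁ = 0)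
    (h : (cos γ : ℂ) * (star (vk (π / 2)) ⬝ᵥ r₀) + (sin γ : ℂ) * (star (vk (π / 2)) ⬝ᵥ r₁) = 0)
    (h' : (sin γ : ℂ) * (star (vk (α - π / 2)) ⬝ᵥ r₀) -
      (cos γ : ℂ) * (star (vk (α - π / 2)) ⬝ᵥ r₁) = 0) : r₀ = 0 ∧ r₁ = 0 := by
  obtain ⟨k₀, hk₀, hr₀⟩ := exists_overlap_eq_neg_mul hcos h₀
  obtain ⟨k₁, hk₁, hr₁⟩ := exists_overlap_eq_neg_mul hcos h₁
  rw [hr₀, hr₁] at h'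
  obtain ⟨hy₀, hy₁⟩ := eq_zero_and_eq_zero_of_rotated_overlaps hγ hk₀ hk₁ h h'
  rw [hy₀, mul_zero] at hr₀
  rw [hy₁, mul_zero] at hr₁
  have hne : sin (α - π / 2 - π / 2) ≠ 0 := by
    rwa [sin_sub_pi_div_two, cos_sub_pi_div_two, neg_ne_zero]
  exact ⟨eq_zero_of_star_vk_dotProduct_eq_zero hne hy₀ hr₀,
    eq_zero_of_star_vk_dotProduct_eq_zero hne hy₁ hr₁⟩

lemma rows_eq_zero_of_four_le_card (hα : α ∈ Ioo 0 (π / 2)) {K : Finset (Fin 6)} (hK : 4 ≤ K.card)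
    {r₀ r₁ : Fin 2 → ℂ}
    (h : ∀ i ∈ K, (cos (angleA α i) : ℂ) * (star (vk (angleB α i)) ⬝ᵥ r₀) +
      (sin (angleA α i) : ℂ) * (star (vk (angleB α i)) ⬝ᵥ r₁) = 0) : r₀ = 0 ∧ r₁ = 0 := by
  have hcos : 0 < cos α := cos_pos_of_mem_Ioo ⟨by linarith [hα.1, pi_pos], hα.2⟩
  have hsin : sin α ≠ 0 := (sin_pos_of_mem_Ioo ⟨hα.1, by linarith [hα.2, pi_pos]⟩).ne'
  have hinj₀ := angleB_injOn_compl_zero_one hα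
  have hinj₁ := angleB_injOn_compl_two_three hα
  rcases subset_or_subset_or_mem_of_four_le_card K hK with hsub | hsub | ⟨hr₀, hr₁, h4, h5⟩
  · exact rows_eq_zero_of_subset (angleB_mem_Ioc hα) (by decide) rfl hsub hK hinj₀ hinj₁
      (fun _ => cos_angleA_ne_zero hcos.ne' hsin) (fun _ => sin_angleA_eq_zero α)
      (fun _ => sin_angleA_ne_zero hcos.ne' hsin) h
  · exact (rows_eq_zero_of_subset (angleB_mem_Ioc hα) (by decide) rfl hsub hK hinj₁ hinj₀
      (fun _ => sin_angleA_ne_zero hcos.ne' hsin) (fun _ => cos_angleA_eq_zero α)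
      (fun _ => cos_angleA_ne_zero hcos.ne' hsin) fun i hi => (add_comm _ _).trans (h i hi)).symm
  · refine rows_eq_zero_of_transversal hcos hsin hcos.ne'
      (hr₀.imp (fun h0 => ?_) fun h1 => ?_) (hr₁.imp (fun h2 => ?_) fun h3 => ?_) (h 4 h4) ?_
    · simpa [angleA, angleB] using h 0 h0
    · simpa [angleA, angleB] using h 1 h1
    · simpa [angleA, angleB] using h 2 h2
    · simpa [angleA, angleB] using h 3 h3
    · simpa only [angleA, angleB, Matrix.cons_val, cos_sub_pi_div_two, sin_sub_pi_div_two,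
        Complex.ofReal_neg, neg_mul, ← sub_eq_add_neg] using h 5 h5

lemma inGeneralPosition_vecAB (hα : α ∈ Ioo 0 (π / 2)) : InGeneralPosition (vecAB α) := by
  intro u hu
  by_contra! hcard
  obtain ⟨hr₀, hr₁⟩ : (fun j => u (0, j)) = 0 ∧ (fun j => u (1, j)) = 0 := by
    refine rows_eq_zero_of_four_le_card hα (by simpa using hcard) fun i hi => ?_
    rw [← star_tensorVec_vk_dotProduct]
    exact (Finset.mem_filter_univ i).mp hi
  refine hu (funext fun ⟨i, j⟩ => ?_)
  fin_cases i
  exacts [congrFun hr₀ j, congrFun hr₁ j]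

end PartyAB

/-- The size-6 family `S₆` is a UPB for the `AB:C:D` grouping: any `AB:C:D` product
vector orthogonal to all six members is zero. -/
theorem stmt4 (α β : ℝ) (hα : α ∈ Set.Ioo 0 (Real.pi / 2))
    (hβ : β ∈ Set.Ioo 0 (Real.pi / 2)) (hαβ : α ≠ β)
    (u : Fin 2 × Fin 2 → ℂ) (c d : Fin 2 → ℂ)
    (horth : ∀ t, ip (S6 α β t) (fun p : Q4 => u (p.1, p.2.1) * c p.2.2.1 * d p.2.2.2) = 0) :
    (fun p : Q4 => u (p.1, p.2.1) * c p.2.2.1 * d p.2.2.2) = 0 := by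
  have hfactors : u = 0 ∨ c = 0 ∨ d = 0 := by
    refine (inGeneralPosition_vecAB hα).eq_zero_or_eq_zero_or_eq_zero
      (inGeneralPosition_vk_angleC hα hβ hαβ) (inGeneralPosition_vk_angleD hα hβ hαβ) (by simp)
      fun t => ?_
    rw [vecAB, ← ip_pv_eq_mul, ← S6_eq_pv_vk]
    exact horth t
  funext p
  rcases hfactors with rfl | rfl | rfl <;> simp
end

section
/- For all α, β ∈ (0, π/2) with α ≠ β, the family S₆ is not a UPB for the A:B:CD grouping: there exists a nonzero ψ : Fin 2 × Fin 2 → ℂ such that the A:B:CD product vector (i,j,k,l) ↦ |1⟩ i · |1⟩ j · ψ (k,l) is nonzero and orthogonal to all six members of S₆. -/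
/-! A member of `S₆` whose `A`- or `B`-factor is `|0⟩` is orthogonal to `|1⟩ ⊗ |1⟩ ⊗ ψ` for every
`ψ`. This disposes of the first three members, and each of the remaining three imposes one linear
equation on `ψ`. Three linear equations in the four-dimensional space `CD` have a nonzero common
solution. -/

open Matrix Module

theorem exists_ne_zero_forall_dual_apply_eq_zero {K V ι : Type*} [DivisionRing K] [AddCommGroup V]
    [Module K V] (φ : ι → Dual K V) (s : Finset ι) (hs : s.card < finrank K V)
    (hφ : ∀ t ∉ s, φ t = 0) : ∃ v ≠ 0, ∀ t, φ t v = 0 := by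
  have : FiniteDimensional K V := FiniteDimensional.of_finrank_pos (s.card.zero_le.trans_lt hs)
  have hker : LinearMap.ker (LinearMap.pi fun t : s => φ t) ≠ ⊥ :=
    LinearMap.ker_ne_bot_of_finrank_lt (by simpa using hs)
  obtain ⟨v, hv, hv0⟩ := Submodule.exists_mem_ne_zero_of_ne_bot hker
  refine ⟨v, hv0, fun t => ?_⟩
  by_cases ht : t ∈ s
  · exact congrFun hv ⟨t, ht⟩
  · rw [hφ t ht, LinearMap.zero_apply]

/-- The `A:B:CD` product vector `u ⊗ v ⊗ ψ`, as a linear function of its `CD`-factor `ψ`. -/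
def pvABCD (u v : Fin 2 → ℂ) : (Fin 2 × Fin 2 → ℂ) →ₗ[ℂ] Q4 → ℂ where
  toFun ψ p := u p.1 * v p.2.1 * ψ (p.2.2.1, p.2.2.2)
  map_add' _ _ := funext fun _ => mul_add _ _ _
  map_smul' _ _ := funext fun _ => mul_left_comm _ _ _

theorem pvABCD_injective {u v : Fin 2 → ℂ} (hu : u ≠ 0) (hv : v ≠ 0) :
    Function.Injective (pvABCD u v) := by
  obtain ⟨i, hi⟩ := Function.ne_iff.mp hu
  obtain ⟨j, hj⟩ := Function.ne_iff.mp hv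
  exact fun ψ χ h => funext fun q => mul_left_cancel₀ (mul_ne_zero hi hj) (congrFun h (i, j, q))

theorem ip_pv_pvABCD (x y z w u v : Fin 2 → ℂ) (ψ : Fin 2 × Fin 2 → ℂ) :
    ip (pv x y z w) (pvABCD u v ψ) =
      (star x ⬝ᵥ u) * (star y ⬝ᵥ v) * ((star fun q : Fin 2 × Fin 2 => z q.1 * w q.2) ⬝ᵥ ψ) := by
  simp only [ip, pv, pvABCD, LinearMap.coe_mk, AddHom.coe_mk, dotProduct, Pi.star_apply, star_mul,
    map_mul, starRingEnd_apply, Fintype.sum_prod_type, Fin.sum_univ_two]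
  ring

theorem exists_ne_zero_forall_ip_pvABCD_eq_zero {ι : Type*} (f : ι → Q4 → ℂ) (u v : Fin 2 → ℂ)
    (s : Finset ι) (hs : s.card < 4) (hf : ∀ t ∉ s, ∀ ψ, ip (f t) (pvABCD u v ψ) = 0) :
    ∃ ψ ≠ 0, ∀ t, ip (f t) (pvABCD u v ψ) = 0 :=
  exists_ne_zero_forall_dual_apply_eq_zero
    (fun t => dotProductBilin ℂ ℂ (star (f t)) ∘ₗ pvABCD u v) s (by simpa using hs)
    fun t ht => LinearMap.ext (hf t ht)

theorem star_ket0_dotProduct_ket1 : star ket0 ⬝ᵥ ket1 = 0 := by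
  simp [ket0, ket1, dotProduct]

theorem ket1_ne_zero : ket1 ≠ 0 :=
  fun h => one_ne_zero (congrFun h 1)

theorem ip_pv_ket0_left_eq_zero (y z w v : Fin 2 → ℂ) (ψ : Fin 2 × Fin 2 → ℂ) :
    ip (pv ket0 y z w) (pvABCD ket1 v ψ) = 0 := by
  rw [ip_pv_pvABCD, star_ket0_dotProduct_ket1, zero_mul, zero_mul]

theorem ip_pv_ket0_right_eq_zero (x z w u : Fin 2 → ℂ) (ψ : Fin 2 × Fin 2 → ℂ) :
    ip (pv x ket0 z w) (pvABCD u ket1 ψ) = 0 := by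
  rw [ip_pv_pvABCD, star_ket0_dotProduct_ket1, mul_zero, zero_mul]

theorem ip_S6_pvABCD_ket1_ket1_eq_zero_of_notMem (α β : ℝ) {t : Fin 6}
    (ht : t ∉ ({3, 4, 5} : Finset (Fin 6))) (ψ : Fin 2 × Fin 2 → ℂ) :
    ip (S6 α β t) (pvABCD ket1 ket1 ψ) = 0 := by
  obtain rfl | rfl | rfl : t = 0 ∨ t = 1 ∨ t = 2 := by decide +revert
  · exact ip_pv_ket0_left_eq_zero _ _ _ _ ψ
  · exact ip_pv_ket0_left_eq_zero _ _ _ _ ψ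
  · exact ip_pv_ket0_right_eq_zero _ _ _ _ ψ

theorem stmt5_general (α β : ℝ) :
    ∃ ψ : Fin 2 × Fin 2 → ℂ, ψ ≠ 0 ∧ pvABCD ket1 ket1 ψ ≠ 0 ∧
      ∀ t, ip (S6 α β t) (pvABCD ket1 ket1 ψ) = 0 := by
  obtain ⟨ψ, hψ, horth⟩ := exists_ne_zero_forall_ip_pvABCD_eq_zero (S6 α β) ket1 ket1 {3, 4, 5}
    (by decide) fun t ht => ip_S6_pvABCD_ket1_ket1_eq_zero_of_notMem α β ht
  have hne : pvABCD ket1 ket1 ψ ≠ 0 :=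
    (map_ne_zero_iff _ (pvABCD_injective ket1_ne_zero ket1_ne_zero)).mpr hψ
  exact ⟨ψ, hψ, hne, horth⟩

/-- `S₆` is not a UPB for the `A:B:CD` grouping: there is a nonzero
`|1⟩ ⊗ |1⟩ ⊗ ψ` orthogonal to all six members. -/
theorem stmt5 (α β : ℝ) (hα : α ∈ Set.Ioo 0 (Real.pi / 2))
    (hβ : β ∈ Set.Ioo 0 (Real.pi / 2)) (hαβ : α ≠ β) :
    ∃ ψ : Fin 2 × Fin 2 → ℂ, ψ ≠ 0 ∧
      (fun p : Q4 => ket1 p.1 * ket1 p.2.1 * ψ (p.2.2.1, p.2.2.2)) ≠ 0 ∧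
      ∀ t, ip (S6 α β t) (fun p : Q4 => ket1 p.1 * ket1 p.2.1 * ψ (p.2.2.1, p.2.2.2)) = 0 :=
  stmt5_general α β
end

section
/- For all α, β ∈ (0, π/2) with α ≠ β, the family S₆ is not a UPB for any of the groupings A:BC:D, A:BD:C, AC:B:D, AD:B:C. That is: there exist nonzero product vectors of each of the forms (i,j,k,l) ↦ a i · w (j,k) · d l, (i,j,k,l) ↦ a i · w (j,l) · c k, (i,j,k,l) ↦ w (i,k) · b j · d l, and (i,j,k,l) ↦ w (i,l) · b j · c k (with a,b,c,d : Fin 2 → ℂ and w : Fin 2 × Fin 2 → ℂ), each orthogonal to all six members of S₆. -/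
/-!
Fix nonzero states of the two qubits that a grouping leaves alone. A member of `S₆` with a local
factor orthogonal to one of these states is orthogonal to every product vector built on them, and
the two states can be chosen so that this happens for three of the six members. The other three
members impose three linear conditions on the state of the merged pair of qubits, which lives in a
space of dimension four, so a nonzero solution exists.
-/

open Finset Matrix

section Tensor

variable {R X Y Z : Type*}

/-- The product vector `x ⊗ y`, with the tensor product of two spaces of functions realised as
functions on the product of the index types. -/
def tensor [Mul R] (x : X → R) (y : Y → R) : X × Y → R := fun p => x p.1 * y p.2

theorem tensor_ne_zero [MulZeroClass R] [NoZeroDivisors R] {x : X → R} {y : Y → R}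
    (hx : x ≠ 0) (hy : y ≠ 0) : tensor x y ≠ 0 := by
  obtain ⟨i, hi⟩ := Function.ne_iff.mp hx
  obtain ⟨j, hj⟩ := Function.ne_iff.mp hy
  exact Function.ne_iff.mpr ⟨(i, j), mul_ne_zero hi hj⟩

theorem star_tensor_dotProduct_tensor [CommSemiring R] [StarRing R] [Fintype X] [Fintype Y]
    (x u : X → R) (y v : Y → R) :
    star (tensor x y) ⬝ᵥ tensor u v = (star x ⬝ᵥ u) * (star y ⬝ᵥ v) := by
  simp only [dotProduct, tensor, Pi.star_apply, star_mul', Fintype.sum_prod_type,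
    Fintype.sum_mul_sum, mul_mul_mul_comm]

theorem tensor_tensor_comp_swap [CommMagma R] (x : X → R) (y : Y → R) (z : Z → R) :
    tensor (tensor y x) z ∘ (Equiv.prodComm X Y).prodCongr (Equiv.refl Z) =
      tensor (tensor x y) z :=
  funext fun p => congrArg (· * z p.2) (mul_comm _ _)

end Tensor

theorem exists_ne_zero_forall_dotProduct_eq_zero {K ι W : Type*} [Field K] [Fintype W]
    {s : Finset ι} (f : ι → W → K) (hs : #s < Fintype.card W) :
    ∃ w ≠ 0, ∀ t ∈ s, f t ⬝ᵥ w = 0 := by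
  have hker : LinearMap.ker (Matrix.of fun t : s => f t).mulVecLin ≠ ⊥ :=
    LinearMap.ker_ne_bot_of_finrank_lt <| by simpa using hs
  obtain ⟨w, hw, hw0⟩ := Submodule.exists_mem_ne_zero_of_ne_bot hker
  exact ⟨w, hw0, fun t ht => congrFun (LinearMap.mem_ker.mp hw) ⟨t, ht⟩⟩

section Extendible

variable {R K ι Q X Y Z : Type*} [Fintype Q]

/-- The family `S` can be extended by a product vector for the tripartite grouping `e` of the index
type `Q`: some nonzero product vector over the three groups is orthogonal to every member of `S`.
For an orthogonal family of product vectors this says that `S` is not a UPB for this grouping. -/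
def IsExtendible [NonUnitalNonAssocSemiring R] [Star R] (S : ι → Q → R) (e : Q ≃ (X × Y) × Z) :
    Prop :=
  ∃ (x : X → R) (y : Y → R) (z : Z → R),
    tensor (tensor x y) z ∘ e ≠ 0 ∧ ∀ t, star (S t) ⬝ᵥ (tensor (tensor x y) z ∘ e) = 0

theorem IsExtendible.of_swap [NonUnitalCommSemiring R] [Star R] {S : ι → Q → R}
    {e : Q ≃ (X × Y) × Z}
    (h : IsExtendible S (e.trans ((Equiv.prodComm X Y).prodCongr (Equiv.refl Z)))) :
    IsExtendible S e := by
  obtain ⟨y, x, z, h⟩ := h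
  rw [Equiv.coe_trans, ← Function.comp_assoc, tensor_tensor_comp_swap] at h
  exact ⟨x, y, z, h⟩

variable [Field K] [StarRing K] [Fintype ι] [DecidableEq ι] [Fintype X] [Fintype Y] [Fintype Z]
  {S : ι → Q → K} {e : Q ≃ (X × Y) × Z} {u : ι → X → K} {v : ι → Y → K} {w : ι → Z → K}
  {x : X → K} {y : Y → K} {z : Z → K} {s₁ s₂ : Finset ι}

theorem isExtendible_of_card_lt_fst (hS : ∀ t, S t = tensor (tensor (u t) (v t)) (w t) ∘ e)
    (hy : y ≠ 0) (hz : z ≠ 0) (hvy : ∀ t ∈ s₁, star (v t) ⬝ᵥ y = 0)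
    (hwz : ∀ t ∈ s₂, star (w t) ⬝ᵥ z = 0)
    (hcard : Fintype.card ι < Fintype.card X + #(s₁ ∪ s₂)) : IsExtendible S e := by
  have hcompl : #(s₁ ∪ s₂)ᶜ < Fintype.card X := by
    have := card_add_card_compl (s₁ ∪ s₂)
    lia
  obtain ⟨x, hx, hux⟩ := exists_ne_zero_forall_dotProduct_eq_zero (fun t => star (u t)) hcompl
  refine ⟨x, y, z, ?_, fun t => ?_⟩
  · exact (e.surjective.injective_comp_right (γ := K)).ne (a₂ := 0)
      (tensor_ne_zero (tensor_ne_zero hx hy) hz)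
  · have hfactor : star (S t) ⬝ᵥ (tensor (tensor x y) z ∘ e) =
        (star (u t) ⬝ᵥ x) * (star (v t) ⬝ᵥ y) * (star (w t) ⬝ᵥ z) := by
      rw [hS, ← star_tensor_dotProduct_tensor, ← star_tensor_dotProduct_tensor]
      exact comp_equiv_dotProduct_comp_equiv (star (tensor (tensor (u t) (v t)) (w t))) _ e
    rw [hfactor]
    by_cases ht : t ∈ s₁ ∪ s₂
    · rcases mem_union.mp ht with ht | ht
      · rw [hvy t ht, mul_zero, zero_mul]
      · rw [hwz t ht, mul_zero]
    · rw [hux t (mem_compl.mpr ht), zero_mul, zero_mul]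

theorem isExtendible_of_card_lt_snd (hS : ∀ t, S t = tensor (tensor (u t) (v t)) (w t) ∘ e)
    (hx : x ≠ 0) (hz : z ≠ 0) (hux : ∀ t ∈ s₁, star (u t) ⬝ᵥ x = 0)
    (hwz : ∀ t ∈ s₂, star (w t) ⬝ᵥ z = 0)
    (hcard : Fintype.card ι < Fintype.card Y + #(s₁ ∪ s₂)) : IsExtendible S e := by
  refine .of_swap (isExtendible_of_card_lt_fst (u := v) (fun t => ?_) hx hz hux hwz hcard)
  rw [hS, Equiv.coe_trans, ← Function.comp_assoc, tensor_tensor_comp_swap]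

end Extendible

theorem ket0_ne_zero : ket0 ≠ 0 := Function.ne_iff.mpr ⟨0, one_ne_zero⟩

theorem vk'_ne_zero (θ : ℝ) : vk' θ ≠ 0 := by
  intro h
  have hsin : Real.sin θ = 0 := Complex.ofReal_eq_zero.mp (congrFun h 0)
  have hcos : Real.cos θ = 0 := Complex.ofReal_eq_zero.mp (neg_eq_zero.mp (congrFun h 1))
  simpa [hsin, hcos] using Real.sin_sq_add_cos_sq θ

theorem star_ket1_dotProduct_ket0 : star ket1 ⬝ᵥ ket0 = 0 := by
  simp [ket0, ket1, dotProduct, Fin.sum_univ_two]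

theorem star_vk_dotProduct_vk' (θ : ℝ) : star (vk θ) ⬝ᵥ vk' θ = 0 := by
  simp [vk, vk', dotProduct, Fin.sum_univ_two, ← Complex.cos_conj, ← Complex.sin_conj, mul_comm]

section Factors

variable (α β : ℝ)

/-- The local factors of qubit `A` in the six members of `S6`. -/
noncomputable def factorA : Fin 6 → Fin 2 → ℂ := ![ket0, ket0, ket1, ket1, vk α, vk' α]

/-- The local factors of qubit `B` in the six members of `S6`. -/
noncomputable def factorB : Fin 6 → Fin 2 → ℂ := ![ket0, vk α, ket0, vk α, ket1, vk' α]

/-- The local factors of qubit `C` in the six members of `S6`. -/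
noncomputable def factorC : Fin 6 → Fin 2 → ℂ := ![ket0, vk α, vk β, vk' β, vk' α, ket1]

/-- The local factors of qubit `D` in the six members of `S6`. -/
noncomputable def factorD : Fin 6 → Fin 2 → ℂ := ![ket0, ket1, vk α, vk β, vk' β, vk' α]

theorem S6_eq_pv (t : Fin 6) :
    S6 α β t = pv (factorA α t) (factorB α t) (factorC α β t) (factorD α β t) := by
  fin_cases t <;> rfl

theorem star_factorA_dotProduct_ket0 :
    ∀ t ∈ ({2, 3} : Finset (Fin 6)), star (factorA α t) ⬝ᵥ ket0 = 0 := by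
  intro t ht
  fin_cases ht <;> exact star_ket1_dotProduct_ket0

theorem star_factorB_dotProduct_vk' :
    ∀ t ∈ ({1, 3} : Finset (Fin 6)), star (factorB α t) ⬝ᵥ vk' α = 0 := by
  intro t ht
  fin_cases ht <;> exact star_vk_dotProduct_vk' α

theorem star_factorC_dotProduct_ket0 :
    ∀ t ∈ ({5} : Finset (Fin 6)), star (factorC α β t) ⬝ᵥ ket0 = 0 := by
  intro t ht
  fin_cases ht
  exact star_ket1_dotProduct_ket0

theorem star_factorC_dotProduct_vk' :
    ∀ t ∈ ({2} : Finset (Fin 6)), star (factorC α β t) ⬝ᵥ vk' β = 0 := by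
  intro t ht
  fin_cases ht
  exact star_vk_dotProduct_vk' β

theorem star_factorD_dotProduct_ket0 :
    ∀ t ∈ ({1} : Finset (Fin 6)), star (factorD α β t) ⬝ᵥ ket0 = 0 := by
  intro t ht
  fin_cases ht
  exact star_ket1_dotProduct_ket0

theorem star_factorD_dotProduct_vk' :
    ∀ t ∈ ({2} : Finset (Fin 6)), star (factorD α β t) ⬝ᵥ vk' α = 0 := by
  intro t ht
  fin_cases ht
  exact star_vk_dotProduct_vk' α

end Factors

section Groupings

/-- The grouping `A:BC:D` of the four qubits. -/
def mergeBC : Q4 ≃ (Fin 2 × (Fin 2 × Fin 2)) × Fin 2 where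
  toFun p := ((p.1, (p.2.1, p.2.2.1)), p.2.2.2)
  invFun q := (q.1.1, q.1.2.1, q.1.2.2, q.2)

/-- The grouping `A:BD:C` of the four qubits. -/
def mergeBD : Q4 ≃ (Fin 2 × (Fin 2 × Fin 2)) × Fin 2 where
  toFun p := ((p.1, (p.2.1, p.2.2.2)), p.2.2.1)
  invFun q := (q.1.1, q.1.2.1, q.2, q.1.2.2)

/-- The grouping `AC:B:D` of the four qubits. -/
def mergeAC : Q4 ≃ ((Fin 2 × Fin 2) × Fin 2) × Fin 2 where
  toFun p := (((p.1, p.2.2.1), p.2.1), p.2.2.2)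
  invFun q := (q.1.1.1, q.1.2, q.1.1.2, q.2)

/-- The grouping `AD:B:C` of the four qubits. -/
def mergeAD : Q4 ≃ ((Fin 2 × Fin 2) × Fin 2) × Fin 2 where
  toFun p := (((p.1, p.2.2.2), p.2.1), p.2.2.1)
  invFun q := (q.1.1.1, q.1.2, q.2, q.1.1.2)

variable (x y z w : Fin 2 → ℂ)

theorem pv_eq_tensor_comp_mergeBC :
    pv x y z w = tensor (tensor x (tensor y z)) w ∘ mergeBC := by
  funext p
  simp only [pv, tensor, mergeBC, Function.comp_apply, Equiv.coe_fn_mk]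
  ring

theorem pv_eq_tensor_comp_mergeBD :
    pv x y z w = tensor (tensor x (tensor y w)) z ∘ mergeBD := by
  funext p
  simp only [pv, tensor, mergeBD, Function.comp_apply, Equiv.coe_fn_mk]
  ring

theorem pv_eq_tensor_comp_mergeAC :
    pv x y z w = tensor (tensor (tensor x z) y) w ∘ mergeAC := by
  funext p
  simp only [pv, tensor, mergeAC, Function.comp_apply, Equiv.coe_fn_mk]
  ring

theorem pv_eq_tensor_comp_mergeAD :
    pv x y z w = tensor (tensor (tensor x w) y) z ∘ mergeAD := by
  funext p
  simp only [pv, tensor, mergeAD, Function.comp_apply, Equiv.coe_fn_mk]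
  ring

end Groupings

section S6

variable (α β : ℝ)

theorem isExtendible_S6_mergeBC : IsExtendible (S6 α β) mergeBC :=
  isExtendible_of_card_lt_snd (s₁ := {2, 3}) (s₂ := {1})
    (fun t => (S6_eq_pv α β t).trans (pv_eq_tensor_comp_mergeBC ..)) ket0_ne_zero ket0_ne_zero
    (star_factorA_dotProduct_ket0 α) (star_factorD_dotProduct_ket0 α β) (by decide)

theorem isExtendible_S6_mergeBD : IsExtendible (S6 α β) mergeBD :=
  isExtendible_of_card_lt_snd (s₁ := {2, 3}) (s₂ := {5})
    (fun t => (S6_eq_pv α β t).trans (pv_eq_tensor_comp_mergeBD ..)) ket0_ne_zero ket0_ne_zero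
    (star_factorA_dotProduct_ket0 α) (star_factorC_dotProduct_ket0 α β) (by decide)

theorem isExtendible_S6_mergeAC : IsExtendible (S6 α β) mergeAC :=
  isExtendible_of_card_lt_fst (s₁ := {1, 3}) (s₂ := {2})
    (fun t => (S6_eq_pv α β t).trans (pv_eq_tensor_comp_mergeAC ..))
    (vk'_ne_zero α) (vk'_ne_zero α) (star_factorB_dotProduct_vk' α)
    (star_factorD_dotProduct_vk' α β) (by decide)

theorem isExtendible_S6_mergeAD : IsExtendible (S6 α β) mergeAD :=
  isExtendible_of_card_lt_fst (s₁ := {1, 3}) (s₂ := {2})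
    (fun t => (S6_eq_pv α β t).trans (pv_eq_tensor_comp_mergeAD ..))
    (vk'_ne_zero α) (vk'_ne_zero β) (star_factorB_dotProduct_vk' α)
    (star_factorC_dotProduct_vk' α β) (by decide)

end S6

theorem stmt6_general (α β : ℝ) :
    IsExtendible (S6 α β) mergeBC ∧ IsExtendible (S6 α β) mergeBD ∧
      IsExtendible (S6 α β) mergeAC ∧ IsExtendible (S6 α β) mergeAD :=
  ⟨isExtendible_S6_mergeBC α β, isExtendible_S6_mergeBD α β,
    isExtendible_S6_mergeAC α β, isExtendible_S6_mergeAD α β⟩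

/-- `S₆` is not a UPB for any of the groupings `A:BC:D`, `A:BD:C`, `AC:B:D`, `AD:B:C`:
for each there is a nonzero product vector of the corresponding form orthogonal to
all six members. -/
theorem stmt6 (α β : ℝ) (hα : α ∈ Set.Ioo 0 (Real.pi / 2))
    (hβ : β ∈ Set.Ioo 0 (Real.pi / 2)) (hαβ : α ≠ β) :
    (∃ (a : Fin 2 → ℂ) (w : Fin 2 × Fin 2 → ℂ) (d : Fin 2 → ℂ),
      (fun p : Q4 => a p.1 * w (p.2.1, p.2.2.1) * d p.2.2.2) ≠ 0 ∧
      ∀ t, ip (S6 α β t) (fun p : Q4 => a p.1 * w (p.2.1, p.2.2.1) * d p.2.2.2) = 0) ∧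
    (∃ (a : Fin 2 → ℂ) (w : Fin 2 × Fin 2 → ℂ) (c : Fin 2 → ℂ),
      (fun p : Q4 => a p.1 * w (p.2.1, p.2.2.2) * c p.2.2.1) ≠ 0 ∧
      ∀ t, ip (S6 α β t) (fun p : Q4 => a p.1 * w (p.2.1, p.2.2.2) * c p.2.2.1) = 0) ∧
    (∃ (w : Fin 2 × Fin 2 → ℂ) (b : Fin 2 → ℂ) (d : Fin 2 → ℂ),
      (fun p : Q4 => w (p.1, p.2.2.1) * b p.2.1 * d p.2.2.2) ≠ 0 ∧
      ∀ t, ip (S6 α β t) (fun p : Q4 => w (p.1, p.2.2.1) * b p.2.1 * d p.2.2.2) = 0) ∧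
    (∃ (w : Fin 2 × Fin 2 → ℂ) (b : Fin 2 → ℂ) (c : Fin 2 → ℂ),
      (fun p : Q4 => w (p.1, p.2.2.2) * b p.2.1 * c p.2.2.1) ≠ 0 ∧
      ∀ t, ip (S6 α β t) (fun p : Q4 => w (p.1, p.2.2.2) * b p.2.1 * c p.2.2.1) = 0) :=
  -- Unfolding `ip`, `tensor` and the groupings makes the two statements definitionally equal.
  stmt6_general α β
end

section
/- For all α, β ∈ (0, π/2) with α ≠ β, the family S₆ is not a UPB for any of the three bipartite 4×4 groupings AB:CD, AC:BD, AD:BC. That is: there exist nonzero product vectors of each of the forms (i,j,k,l) ↦ u (i,j) · w (k,l), (i,j,k,l) ↦ u (i,k) · w (j,l), and (i,j,k,l) ↦ u (i,l) · w (j,k) (with u, w : Fin 2 × Fin 2 → ℂ), each orthogonal to all six members of S₆. -/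
/-!
The proof is a dimension count. A product vector `u ⊗ w` is orthogonal to `a ⊗ b` as soon as
`u ⟂ a` or `w ⟂ b`. In dimension `4` some nonzero `u` is orthogonal to any three prescribed vectors,
so six product vectors can be shared out: the `4`-dimensional factor on one side of the cut deals
with three of them and the factor on the other side with the remaining three.
-/

open Finset

section BipartiteProduct

variable {I J K 𝕜 : Type*}

/-- The product vector `u ⊗ w` on the index type `I`, viewed as the bipartite system `J × K`
through the identification `e`. Taking `e` as a parameter treats all the groupings of a multipartite
system at once. -/
def bipartiteProduct [Mul 𝕜] (e : I ≃ J × K) (u : J → 𝕜) (w : K → 𝕜) : I → 𝕜 :=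
  fun i => u (e i).1 * w (e i).2

lemma bipartiteProduct_ne_zero [MulZeroClass 𝕜] [NoZeroDivisors 𝕜] (e : I ≃ J × K)
    {u : J → 𝕜} {w : K → 𝕜} (hu : u ≠ 0) (hw : w ≠ 0) : bipartiteProduct e u w ≠ 0 := by
  obtain ⟨j, hj⟩ := Function.ne_iff.mp hu
  obtain ⟨k, hk⟩ := Function.ne_iff.mp hw
  refine Function.ne_iff.mpr ⟨e.symm (j, k), ?_⟩
  simpa only [bipartiteProduct, Equiv.apply_symm_apply, Pi.zero_apply] using mul_ne_zero hj hk

lemma star_bipartiteProduct [CommMagma 𝕜] [StarMul 𝕜] (e : I ≃ J × K) (u : J → 𝕜) (w : K → 𝕜) :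
    star (bipartiteProduct e u w) = bipartiteProduct e (star u) (star w) :=
  funext fun _ => star_mul' _ _

lemma bipartiteProduct_dotProduct_bipartiteProduct [Fintype I] [Fintype J] [Fintype K]
    [CommSemiring 𝕜] (e : I ≃ J × K) (a u : J → 𝕜) (b w : K → 𝕜) :
    bipartiteProduct e a b ⬝ᵥ bipartiteProduct e u w = (a ⬝ᵥ u) * (b ⬝ᵥ w) :=
  calc bipartiteProduct e a b ⬝ᵥ bipartiteProduct e u w
      = ∑ p : J × K, a p.1 * b p.2 * (u p.1 * w p.2) :=
        e.sum_comp fun p => a p.1 * b p.2 * (u p.1 * w p.2)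
    _ = ∑ j, ∑ k, a j * u j * (b k * w k) := by
        simp only [Fintype.sum_prod_type, mul_mul_mul_comm]
    _ = (a ⬝ᵥ u) * (b ⬝ᵥ w) := (Fintype.sum_mul_sum _ _).symm

end BipartiteProduct

section DimensionCount

variable {ι I J K 𝕜 : Type*} [Fintype I] [Fintype J] [Fintype K] [Field 𝕜]

lemma exists_ne_zero_forall_mem_dotProduct_eq_zero (a : ι → J → 𝕜) (s : Finset ι)
    (hs : #s < Fintype.card J) : ∃ u : J → 𝕜, u ≠ 0 ∧ ∀ i ∈ s, a i ⬝ᵥ u = 0 := by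
  let A : Matrix s J 𝕜 := Matrix.of fun i => a i
  have hker : LinearMap.ker A.mulVecLin ≠ ⊥ :=
    LinearMap.ker_ne_bot_of_finrank_lt (by simpa using hs)
  obtain ⟨u, hu, hu0⟩ := Submodule.exists_mem_ne_zero_of_ne_bot hker
  exact ⟨u, hu0, fun i hi => congrFun (LinearMap.mem_ker.mp hu) ⟨i, hi⟩⟩

lemma exists_ne_zero_forall_dotProduct_eq_zero_or [Fintype ι] [Nonempty J] [Nonempty K]
    (a : ι → J → 𝕜) (b : ι → K → 𝕜)
    (hcard : Fintype.card ι + 1 < Fintype.card J + Fintype.card K) :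
    ∃ (u : J → 𝕜) (w : K → 𝕜), u ≠ 0 ∧ w ≠ 0 ∧ ∀ i, a i ⬝ᵥ u = 0 ∨ b i ⬝ᵥ w = 0 := by
  classical
  have hJ : 0 < Fintype.card J := Fintype.card_pos
  have hK : 0 < Fintype.card K := Fintype.card_pos
  obtain ⟨s, -, hs⟩ : ∃ s ⊆ (univ : Finset ι), #s = min (Fintype.card ι) (Fintype.card J - 1) :=
    exists_subset_card_eq (min_le_left _ _)
  obtain ⟨u, hu0, hu⟩ := exists_ne_zero_forall_mem_dotProduct_eq_zero a s (by omega)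
  obtain ⟨w, hw0, hw⟩ :=
    exists_ne_zero_forall_mem_dotProduct_eq_zero b sᶜ (by rw [card_compl]; omega)
  refine ⟨u, w, hu0, hw0, fun i => ?_⟩
  by_cases hi : i ∈ s
  · exact .inl (hu i hi)
  · exact .inr (hw i (mem_compl.mpr hi))

/-- In contrapositive form: an unextendible product basis of an `m × n` system has at least
`m + n - 1` members. -/
theorem exists_bipartiteProduct_orthogonal [StarMul 𝕜] [Fintype ι] [Nonempty J] [Nonempty K]
    (e : I ≃ J × K) (v : ι → I → 𝕜) (hv : ∀ t, ∃ a b, v t = bipartiteProduct e a b)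
    (hcard : Fintype.card ι + 1 < Fintype.card J + Fintype.card K) :
    ∃ u w, bipartiteProduct e u w ≠ 0 ∧ ∀ t, star (v t) ⬝ᵥ bipartiteProduct e u w = 0 := by
  choose a b hab using hv
  obtain ⟨u, w, hu, hw, huw⟩ := exists_ne_zero_forall_dotProduct_eq_zero_or
    (fun t => star (a t)) (fun t => star (b t)) hcard
  refine ⟨u, w, bipartiteProduct_ne_zero e hu hw, fun t => ?_⟩
  rw [hab, star_bipartiteProduct, bipartiteProduct_dotProduct_bipartiteProduct]
  exact mul_eq_zero.mpr (huw t)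

end DimensionCount

section FourQubits

/-- The grouping `AB:CD` of four qubits as a bipartite `4 × 4` system. -/
def groupABCD : Q4 ≃ (Fin 2 × Fin 2) × (Fin 2 × Fin 2) where
  toFun p := ((p.1, p.2.1), (p.2.2.1, p.2.2.2))
  invFun q := (q.1.1, q.1.2, q.2.1, q.2.2)

/-- The grouping `AC:BD` of four qubits as a bipartite `4 × 4` system. -/
def groupACBD : Q4 ≃ (Fin 2 × Fin 2) × (Fin 2 × Fin 2) where
  toFun p := ((p.1, p.2.2.1), (p.2.1, p.2.2.2))
  invFun q := (q.1.1, q.2.1, q.1.2, q.2.2)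

/-- The grouping `AD:BC` of four qubits as a bipartite `4 × 4` system. -/
def groupADBC : Q4 ≃ (Fin 2 × Fin 2) × (Fin 2 × Fin 2) where
  toFun p := ((p.1, p.2.2.2), (p.2.1, p.2.2.1))
  invFun q := (q.1.1, q.2.1, q.2.2, q.1.2)

variable (x y z w : Fin 2 → ℂ)

lemma pv_eq_bipartiteProduct_groupABCD :
    pv x y z w = bipartiteProduct groupABCD (fun q => x q.1 * y q.2) (fun q => z q.1 * w q.2) :=
  funext fun _ => mul_assoc _ _ _

lemma pv_eq_bipartiteProduct_groupACBD :
    pv x y z w = bipartiteProduct groupACBD (fun q => x q.1 * z q.2) (fun q => y q.1 * w q.2) := by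
  funext p
  simp only [pv, bipartiteProduct, groupACBD, Equiv.coe_fn_mk]
  ring

lemma pv_eq_bipartiteProduct_groupADBC :
    pv x y z w = bipartiteProduct groupADBC (fun q => x q.1 * w q.2) (fun q => y q.1 * z q.2) := by
  funext p
  simp only [pv, bipartiteProduct, groupADBC, Equiv.coe_fn_mk]
  ring

end FourQubits

lemma exists_S6_eq_pv (α β : ℝ) (t : Fin 6) : ∃ x y z w, S6 α β t = pv x y z w := by
  fin_cases t <;> exact ⟨_, _, _, _, rfl⟩

theorem stmt7_general {ι : Type*} [Fintype ι] (v : ι → Q4 → ℂ)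
    (hv : ∀ t, ∃ x y z w, v t = pv x y z w) (hcard : Fintype.card ι ≤ 6) :
    (∃ u w : Fin 2 × Fin 2 → ℂ,
      (fun p : Q4 => u (p.1, p.2.1) * w (p.2.2.1, p.2.2.2)) ≠ 0 ∧
      ∀ t, ip (v t) (fun p : Q4 => u (p.1, p.2.1) * w (p.2.2.1, p.2.2.2)) = 0) ∧
    (∃ u w : Fin 2 × Fin 2 → ℂ,
      (fun p : Q4 => u (p.1, p.2.2.1) * w (p.2.1, p.2.2.2)) ≠ 0 ∧
      ∀ t, ip (v t) (fun p : Q4 => u (p.1, p.2.2.1) * w (p.2.1, p.2.2.2)) = 0) ∧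
    (∃ u w : Fin 2 × Fin 2 → ℂ,
      (fun p : Q4 => u (p.1, p.2.2.2) * w (p.2.1, p.2.2.1)) ≠ 0 ∧
      ∀ t, ip (v t) (fun p : Q4 => u (p.1, p.2.2.2) * w (p.2.1, p.2.2.1)) = 0) := by
  have hdim : Fintype.card ι + 1 < Fintype.card (Fin 2 × Fin 2) + Fintype.card (Fin 2 × Fin 2) := by
    simp only [Fintype.card_prod, Fintype.card_fin]
    omega
  choose x y z w hpv using hv
  -- `ip v w` unfolds to `star v ⬝ᵥ w`, and the three goals to statements about `bipartiteProduct`.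
  exact ⟨exists_bipartiteProduct_orthogonal groupABCD v
      (fun t => ⟨_, _, (hpv t).trans (pv_eq_bipartiteProduct_groupABCD ..)⟩) hdim,
    exists_bipartiteProduct_orthogonal groupACBD v
      (fun t => ⟨_, _, (hpv t).trans (pv_eq_bipartiteProduct_groupACBD ..)⟩) hdim,
    exists_bipartiteProduct_orthogonal groupADBC v
      (fun t => ⟨_, _, (hpv t).trans (pv_eq_bipartiteProduct_groupADBC ..)⟩) hdim⟩

/-- `S₆` is not a UPB for any of the bipartite `4 × 4` groupings `AB:CD`, `AC:BD`,
`AD:BC`: for each there is a nonzero product vector of the corresponding form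
orthogonal to all six members. -/
theorem stmt7 (α β : ℝ) (hα : α ∈ Set.Ioo 0 (Real.pi / 2))
    (hβ : β ∈ Set.Ioo 0 (Real.pi / 2)) (hαβ : α ≠ β) :
    (∃ u w : Fin 2 × Fin 2 → ℂ,
      (fun p : Q4 => u (p.1, p.2.1) * w (p.2.2.1, p.2.2.2)) ≠ 0 ∧
      ∀ t, ip (S6 α β t) (fun p : Q4 => u (p.1, p.2.1) * w (p.2.2.1, p.2.2.2)) = 0) ∧
    (∃ u w : Fin 2 × Fin 2 → ℂ,
      (fun p : Q4 => u (p.1, p.2.2.1) * w (p.2.1, p.2.2.2)) ≠ 0 ∧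
      ∀ t, ip (S6 α β t) (fun p : Q4 => u (p.1, p.2.2.1) * w (p.2.1, p.2.2.2)) = 0) ∧
    (∃ u w : Fin 2 × Fin 2 → ℂ,
      (fun p : Q4 => u (p.1, p.2.2.2) * w (p.2.1, p.2.2.1)) ≠ 0 ∧
      ∀ t, ip (S6 α β t) (fun p : Q4 => u (p.1, p.2.2.2) * w (p.2.1, p.2.2.1)) = 0) :=
  stmt7_general (S6 α β) (exists_S6_eq_pv α β) (by simp)
end

section
/- For all α, β, γ, δ ∈ (0, π/2), the size-9 family S₉ is a UPB for each of the three bipartite 4×4 groupings AB:CD, AC:BD, AD:BC: if a vector of the form (i,j,k,l) ↦ u (i,j) · w (k,l) (respectively (i,j,k,l) ↦ u (i,k) · w (j,l), or (i,j,k,l) ↦ u (i,l) · w (j,k), with u, w : Fin 2 × Fin 2 → ℂ) is orthogonal to all nine members of S₉, then it is the zero vector. -/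
/-- The 4-qubit UPB of size 9:
`{|0,0,1,d⟩, |0,1,c,0⟩, |0,b,0,1⟩, |1,1,0,d⟩, |1,b,1,0⟩, |1,0,c,1⟩, |a,0,0,0⟩,
 |a,1,1,1⟩, |a',b',c',d'⟩}`. -/
noncomputable def S9 (α β γ δ : ℝ) : Fin 9 → Q4 → ℂ :=
  ![pv ket0 ket0 ket1 (vk δ),
    pv ket0 ket1 (vk γ) ket0,
    pv ket0 (vk β) ket0 ket1,
    pv ket1 ket1 ket0 (vk δ),
    pv ket1 (vk β) ket1 ket0,
    pv ket1 ket0 (vk γ) ket1,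
    pv (vk α) ket0 ket0 ket0,
    pv (vk α) ket1 ket1 ket1,
    pv (vk' α) (vk' β) (vk' γ) (vk' δ)]

/-!
Cyclically permuting the qubits `B, C, D` permutes `S₉` up to a renaming of the angles, so the
grouping `AB:CD` suffices. There, put the basis states `00, 01, 11, 10` of a qubit pair on the
corners of a square, and on each edge the superposition of its two ends that occurs in `S₉`. Then
`S₉` consists of the four products of corner `i` with edge `i + 2`, the four products of edge `i`
with corner `i + 1`, and `|a',b',c',d'⟩`. Relative to `a' ⊗ b'`, being orthogonal to an edge means
having equal coordinates at its ends. If `u ⊗ w ≠ 0` is orthogonal to the first eight of these, the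
nonzero coordinates of `u` all agree, and likewise for `w`. Thus `u` is a nonzero multiple of
`a' ⊗ b'` on its support, so it cannot be orthogonal to `a' ⊗ b'`; nor can `w` be to `c' ⊗ d'`.
-/

open scoped Matrix

section Unextendible

variable {ι κ X Y Z : Type*}

/-- Unextendibility of the family `S` for the grouping that reads off the two groups of qubits by
`g` and `h`: no nonzero product vector `u (g p) * w (h p)` is orthogonal to every member of `S`. -/
def IsUnextendible (S : ι → Q4 → ℂ) (g : Q4 → X) (h : Q4 → Y) : Prop :=
  ∀ (u : X → ℂ) (w : Y → ℂ), (∀ t, ip (S t) (fun p => u (g p) * w (h p)) = 0) →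
    (fun p => u (g p) * w (h p)) = 0

theorem IsUnextendible.comp_right {S : ι → Q4 → ℂ} {g : Q4 → X} {h : Q4 → Y}
    (H : IsUnextendible S g h) (φ : Y → Z) : IsUnextendible S g (φ ∘ h) :=
  fun u w => H u (w ∘ φ)

theorem ip_comp_equiv (σ : Q4 ≃ Q4) (v w : Q4 → ℂ) : ip (v ∘ σ) (w ∘ σ) = ip v w :=
  σ.sum_comp fun p => (starRingEnd ℂ) (v p) * w p

theorem IsUnextendible.of_comp_equiv {S : ι → Q4 → ℂ} {S' : κ → Q4 → ℂ} {g : Q4 → X} {h : Q4 → Y}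
    (σ : Q4 ≃ Q4) (hS : ∀ s, ∃ t, S' s = S t ∘ σ) (H : IsUnextendible S' (g ∘ σ) (h ∘ σ)) :
    IsUnextendible S g h := by
  intro u w horth
  have hσ : (fun p => u (g (σ p)) * w (h (σ p))) = 0 := by
    refine H u w fun s => ?_
    obtain ⟨t, ht⟩ := hS s
    rw [ht, ← horth t]
    exact ip_comp_equiv σ (S t) fun p => u (g p) * w (h p)
  funext p
  simpa using congrFun hσ (σ.symm p)

end Unextendible

section Square

variable {M N : Type*} [Zero M] [Zero N]

/-- The constraints that the eight members of `S₉` other than `|a',b',c',d'⟩` put on the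
coordinates `x`, `y` of the two factors around the square `ℤ/4`: each corner of one factor either
vanishes or forces equality along an edge of the other. -/
def Interlocked (x : Fin 4 → M) (y : Fin 4 → N) : Prop :=
  (∀ i, x i = 0 ∨ y (i + 2) = y (i + 3)) ∧ ∀ i, y (i + 1) = 0 ∨ x i = x (i + 1)

theorem Interlocked.symm {x : Fin 4 → M} {y : Fin 4 → N} (h : Interlocked x y) :
    Interlocked y fun i => x (i + 1) := by
  refine ⟨fun i => ?_, fun i => ?_⟩
  · simpa [add_assoc] using h.2 (i + 3)
  · simpa [add_assoc] using h.1 (i + 2)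

theorem fin_four_eq_add (i j : Fin 4) : j = i ∨ j = i + 1 ∨ j = i + 2 ∨ j = i + 3 := by
  decide +revert

theorem Interlocked.eq_succ {x : Fin 4 → M} {y : Fin 4 → N} (h : Interlocked x y)
    (hy : y ≠ 0) {i : Fin 4} (hi : x i ≠ 0) (hi' : x (i + 1) ≠ 0) : x i = x (i + 1) := by
  have h23 : y (i + 2) = y (i + 3) := (h.1 i).resolve_left hi
  have h30 : y (i + 3) = y i := by
    simpa [add_assoc, hi'] using h.1 (i + 1)
  refine (h.2 i).elim (fun h1 => ?_) id
  have h0 : y i ≠ 0 := by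
    refine fun h0 => hy (funext fun j => ?_)
    rcases fin_four_eq_add i j with rfl | rfl | rfl | rfl <;> simp [*]
  have e12 : x (i + 1) = x (i + 2) := by
    simpa [add_assoc, h23, h30, h0] using h.2 (i + 1)
  have e23 : x (i + 2) = x (i + 3) := by
    simpa [add_assoc, h30, h0] using h.2 (i + 2)
  have e30 : x (i + 3) = x i := by
    simpa [add_assoc, h0] using h.2 (i + 3)
  rw [e12, e23, e30]

theorem Interlocked.eq_add_two {x : Fin 4 → M} {y : Fin 4 → N} (h : Interlocked x y)
    (hy : y ≠ 0) {i : Fin 4} (hi : x i ≠ 0) (hi' : x (i + 2) ≠ 0) : x i = x (i + 2) := by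
  have h23 : y (i + 2) = y (i + 3) := (h.1 i).resolve_left hi
  have h01 : y i = y (i + 1) := by
    simpa [add_assoc, hi'] using h.1 (i + 2)
  by_cases h1 : y (i + 1) = 0
  · have h3 : y (i + 3) ≠ 0 := by
      refine fun h3 => hy (funext fun j => ?_)
      rcases fin_four_eq_add i j with rfl | rfl | rfl | rfl <;> simp [*]
    have e12 : x (i + 1) = x (i + 2) := by
      simpa [add_assoc, h23, h3] using h.2 (i + 1)
    exact (h.eq_succ hy hi (e12 ▸ hi')).trans e12
  · have e01 : x i = x (i + 1) := (h.2 i).resolve_left h1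
    have e12 : x (i + 1) = x (i + 1 + 1) :=
      h.eq_succ hy (e01 ▸ hi) (by simpa [add_assoc] using hi')
    simpa [add_assoc] using e01.trans e12

theorem Interlocked.eq_of_ne_zero {x : Fin 4 → M} {y : Fin 4 → N} (h : Interlocked x y)
    (hy : y ≠ 0) {i j : Fin 4} (hi : x i ≠ 0) (hj : x j ≠ 0) : x i = x j := by
  rcases fin_four_eq_add i j with rfl | rfl | rfl | rfl
  · rfl
  · exact h.eq_succ hy hi hj
  · exact h.eq_add_two hy hi hj
  · have e30 := h.eq_succ hy hj (by simpa [add_assoc] using hi)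
    simpa [add_assoc] using e30.symm

theorem Interlocked.exists_forall_eq_zero_or_eq_left {x : Fin 4 → M} {y : Fin 4 → N}
    (h : Interlocked x y) (hy : y ≠ 0) : ∃ c, ∀ i, x i = 0 ∨ x i = c := by
  by_cases hx : x = 0
  · exact ⟨0, fun i => .inl (congrFun hx i)⟩
  · obtain ⟨k, hk⟩ := Function.ne_iff.mp hx
    exact ⟨x k, fun i => or_iff_not_imp_left.mpr fun hi => h.eq_of_ne_zero hy hi hk⟩

theorem Interlocked.exists_forall_eq_zero_or_eq_right {x : Fin 4 → M} {y : Fin 4 → N}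
    (h : Interlocked x y) (hx : x ≠ 0) : ∃ c, ∀ i, y i = 0 ∨ y i = c := by
  refine h.symm.exists_forall_eq_zero_or_eq_left ?_
  obtain ⟨k, hk⟩ := Function.ne_iff.mp hx
  exact Function.ne_iff.mpr ⟨k - 1, by simpa using hk⟩

end Square

theorem eq_zero_of_star_dotProduct_eq_zero {n R : Type*} [Fintype n] [CommRing R] [PartialOrder R]
    [StarRing R] [StarOrderedRing R] [NoZeroDivisors R] {f u : n → R} {c : R}
    (hu : ∀ i, u i = 0 ∨ u i = c * f i) (h : star f ⬝ᵥ u = 0) : u = 0 := by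
  have huf : star u ⬝ᵥ u = star c * (star f ⬝ᵥ u) := by
    simp only [dotProduct, Finset.mul_sum, Pi.star_apply]
    refine Finset.sum_congr rfl fun i _ => ?_
    rcases hu i with hi | hi
    · simp only [hi, mul_zero]
    · rw [← mul_assoc, ← star_mul', ← hi]
  rwa [h, mul_zero, dotProduct_star_self_eq_zero] at huf

section TwoQubit

/-- The two-qubit product vector `x ⊗ y`. -/
def qubitProd (x y : Fin 2 → ℂ) : Fin 2 × Fin 2 → ℂ := fun p => x p.1 * y p.2

/-- The product vector `f ⊗ g` for the grouping `AB:CD`. -/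
def pairProd (f g : Fin 2 × Fin 2 → ℂ) : Q4 → ℂ :=
  fun p => f (p.1, p.2.1) * g (p.2.2.1, p.2.2.2)

theorem pv_eq_pairProd (x y z w : Fin 2 → ℂ) :
    pv x y z w = pairProd (qubitProd x y) (qubitProd z w) := by
  funext p
  simp only [pv, pairProd, qubitProd, mul_assoc]

theorem ip_pairProd (f g u w : Fin 2 × Fin 2 → ℂ) :
    ip (pairProd f g) (pairProd u w) = (star f ⬝ᵥ u) * (star g ⬝ᵥ w) := by
  simp only [ip, pairProd, dotProduct, Fintype.sum_mul_sum, Pi.star_apply, starRingEnd_apply,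
    star_mul']
  rw [← Fintype.sum_prod_type', ← (Equiv.prodAssoc (Fin 2) (Fin 2) (Fin 2 × Fin 2)).sum_comp]
  exact Fintype.sum_congr _ _ fun p => mul_mul_mul_comm ..

/-- The corners of the square of two-qubit basis states, in cyclic order. -/
def corner : Fin 4 → Fin 2 × Fin 2 := ![(0, 0), (0, 1), (1, 1), (1, 0)]

theorem corner_surjective : Function.Surjective corner := by
  decide

/-- The basis states at the corners of the square. -/
def cornerState : Fin 4 → Fin 2 × Fin 2 → ℂ :=
  ![qubitProd ket0 ket0, qubitProd ket0 ket1, qubitProd ket1 ket1, qubitProd ket1 ket0]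

theorem star_cornerState_dotProduct (i : Fin 4) (u : Fin 2 × Fin 2 → ℂ) :
    star (cornerState i) ⬝ᵥ u = u (corner i) := by
  fin_cases i <;>
    simp [cornerState, corner, qubitProd, ket0, ket1, dotProduct, Fintype.sum_prod_type]

/-- The states of `S₉` on the edges of the square, edge `i` joining corner `i` to corner `i + 1`;
the angles `s`, `t` are those of the first and the second qubit of the pair. -/
noncomputable def edgeState (s t : ℝ) : Fin 4 → Fin 2 × Fin 2 → ℂ :=
  ![qubitProd ket0 (vk t), qubitProd (vk s) ket1, qubitProd ket1 (vk t), qubitProd (vk s) ket0]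

theorem star_edgeState_dotProduct (s t : ℝ) (i : Fin 4) (u : Fin 2 × Fin 2 → ℂ) :
    star (edgeState s t i) ⬝ᵥ u =
      ![Real.cos t * u (0, 0) + Real.sin t * u (0, 1),
        Real.cos s * u (0, 1) + Real.sin s * u (1, 1),
        Real.cos t * u (1, 0) + Real.sin t * u (1, 1),
        Real.cos s * u (0, 0) + Real.sin s * u (1, 0)] i := by
  fin_cases i <;>
    simp [edgeState, qubitProd, ket0, ket1, vk, dotProduct, Fintype.sum_prod_type,
      -Complex.ofReal_sin, -Complex.ofReal_cos]

/-- The coordinates of `u` at the corners of the square relative to `vk' s ⊗ vk' t`, the vector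
orthogonal to all edges. -/
noncomputable def squareCoord (s t : ℝ) (u : Fin 2 × Fin 2 → ℂ) (i : Fin 4) : ℂ :=
  u (corner i) / qubitProd (vk' s) (vk' t) (corner i)

variable {s t : ℝ} {u : Fin 2 × Fin 2 → ℂ}

theorem vk'_ne_zero_s10 (ht : Real.sin (2 * t) ≠ 0) (i : Fin 2) : vk' t i ≠ 0 := by
  have hprod : 2 * Real.sin t * Real.cos t ≠ 0 := Real.sin_two_mul t ▸ ht
  have hsin : Real.sin t ≠ 0 := right_ne_zero_of_mul (left_ne_zero_of_mul hprod)
  have hcos : Real.cos t ≠ 0 := right_ne_zero_of_mul hprod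
  fin_cases i
  · exact Complex.ofReal_ne_zero.mpr hsin
  · exact neg_ne_zero.mpr (Complex.ofReal_ne_zero.mpr hcos)

theorem qubitProd_vk'_ne_zero (hs : Real.sin (2 * s) ≠ 0) (ht : Real.sin (2 * t) ≠ 0)
    (p : Fin 2 × Fin 2) : qubitProd (vk' s) (vk' t) p ≠ 0 :=
  mul_ne_zero (vk'_ne_zero_s10 hs p.1) (vk'_ne_zero_s10 ht p.2)

theorem squareCoord_eq_zero_of_star_cornerState_dotProduct {i : Fin 4}
    (h : star (cornerState i) ⬝ᵥ u = 0) : squareCoord s t u i = 0 := by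
  rw [star_cornerState_dotProduct] at h
  rw [squareCoord, h, zero_div]

theorem squareCoord_eq_succ_of_star_edgeState_dotProduct (hs : Real.sin (2 * s) ≠ 0)
    (ht : Real.sin (2 * t) ≠ 0) {i : Fin 4} (h : star (edgeState s t i) ⬝ᵥ u = 0) :
    squareCoord s t u i = squareCoord s t u (i + 1) := by
  have hne := qubitProd_vk'_ne_zero hs ht
  rw [squareCoord, squareCoord, div_eq_div_iff (hne _) (hne _)]
  rw [star_edgeState_dotProduct] at h
  fin_cases i
  · change Real.cos t * u (0, 0) + Real.sin t * u (0, 1) = 0 at h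
    change u (0, 0) * (Real.sin s * -Real.cos t) = u (0, 1) * (Real.sin s * Real.sin t)
    linear_combination -(Real.sin s : ℂ) * h
  · change Real.cos s * u (0, 1) + Real.sin s * u (1, 1) = 0 at h
    change u (0, 1) * (-Real.cos s * -Real.cos t) = u (1, 1) * (Real.sin s * -Real.cos t)
    linear_combination (Real.cos t : ℂ) * h
  · change Real.cos t * u (1, 0) + Real.sin t * u (1, 1) = 0 at h
    change u (1, 1) * (-Real.cos s * Real.sin t) = u (1, 0) * (-Real.cos s * -Real.cos t)
    linear_combination -(Real.cos s : ℂ) * h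
  · change Real.cos s * u (0, 0) + Real.sin s * u (1, 0) = 0 at h
    change u (1, 0) * (Real.sin s * Real.sin t) = u (0, 0) * (-Real.cos s * Real.sin t)
    linear_combination (Real.sin t : ℂ) * h

theorem squareCoord_ne_zero (hs : Real.sin (2 * s) ≠ 0) (ht : Real.sin (2 * t) ≠ 0) (hu : u ≠ 0) :
    squareCoord s t u ≠ 0 := by
  obtain ⟨p, hp⟩ := Function.ne_iff.mp hu
  obtain ⟨i, rfl⟩ := corner_surjective p
  exact Function.ne_iff.mpr ⟨i, div_ne_zero hp (qubitProd_vk'_ne_zero hs ht _)⟩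

open scoped ComplexOrder in
theorem eq_zero_of_squareCoord_eq (hs : Real.sin (2 * s) ≠ 0) (ht : Real.sin (2 * t) ≠ 0) {c : ℂ}
    (hc : ∀ i, squareCoord s t u i = 0 ∨ squareCoord s t u i = c)
    (h : star (qubitProd (vk' s) (vk' t)) ⬝ᵥ u = 0) : u = 0 := by
  refine eq_zero_of_star_dotProduct_eq_zero (c := c) (corner_surjective.forall.mpr fun i => ?_) h
  have hne := qubitProd_vk'_ne_zero hs ht (corner i)
  exact (hc i).imp (fun h0 => (div_eq_zero_iff.mp h0).resolve_right hne) (div_eq_iff hne).mp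

end TwoQubit

section S9

theorem exists_S9_eq_cornerState_edgeState (α β γ δ : ℝ) (i : Fin 4) :
    ∃ m, S9 α β γ δ m = pairProd (cornerState i) (edgeState γ δ (i + 2)) := by
  fin_cases i
  exacts [⟨0, pv_eq_pairProd ..⟩, ⟨1, pv_eq_pairProd ..⟩, ⟨3, pv_eq_pairProd ..⟩,
    ⟨5, pv_eq_pairProd ..⟩]

theorem exists_S9_eq_edgeState_cornerState (α β γ δ : ℝ) (i : Fin 4) :
    ∃ m, S9 α β γ δ m = pairProd (edgeState α β i) (cornerState (i + 1)) := by
  fin_cases i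
  exacts [⟨2, pv_eq_pairProd ..⟩, ⟨7, pv_eq_pairProd ..⟩, ⟨4, pv_eq_pairProd ..⟩,
    ⟨6, pv_eq_pairProd ..⟩]

/-- The cyclic relabelling of the qubits `B, C, D` that carries the grouping `AC:BD` to `AB:CD` and
`AD:BC` to `AC:BD`. -/
def qubitRotation : Q4 ≃ Q4 where
  toFun p := (p.1, p.2.2.2, p.2.1, p.2.2.1)
  invFun p := (p.1, p.2.2.1, p.2.2.2, p.2.1)

theorem pv_eq_comp_qubitRotation (x y z w : Fin 2 → ℂ) :
    pv x z w y = pv x y z w ∘ qubitRotation := by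
  funext p
  simp only [Function.comp_apply, pv, qubitRotation, Equiv.coe_fn_mk]
  ring

theorem exists_S9_comp_qubitRotation (α β γ δ : ℝ) (m : Fin 9) :
    ∃ n, S9 α γ δ β m = S9 α β γ δ n ∘ qubitRotation := by
  fin_cases m
  exacts [⟨2, pv_eq_comp_qubitRotation ..⟩, ⟨0, pv_eq_comp_qubitRotation ..⟩,
    ⟨1, pv_eq_comp_qubitRotation ..⟩, ⟨4, pv_eq_comp_qubitRotation ..⟩,
    ⟨5, pv_eq_comp_qubitRotation ..⟩, ⟨3, pv_eq_comp_qubitRotation ..⟩,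
    ⟨6, pv_eq_comp_qubitRotation ..⟩, ⟨7, pv_eq_comp_qubitRotation ..⟩,
    ⟨8, pv_eq_comp_qubitRotation ..⟩]

variable {α β γ δ : ℝ}

theorem interlocked_squareCoord {u w : Fin 2 × Fin 2 → ℂ} (hα : Real.sin (2 * α) ≠ 0)
    (hβ : Real.sin (2 * β) ≠ 0) (hγ : Real.sin (2 * γ) ≠ 0) (hδ : Real.sin (2 * δ) ≠ 0)
    (h : ∀ m, ip (S9 α β γ δ m) (pairProd u w) = 0) :
    Interlocked (squareCoord α β u) (squareCoord γ δ w) := by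
  refine ⟨fun i => ?_, fun i => ?_⟩
  · obtain ⟨m, hm⟩ := exists_S9_eq_cornerState_edgeState α β γ δ i
    have horth := h m
    rw [hm, ip_pairProd, mul_eq_zero] at horth
    refine horth.imp squareCoord_eq_zero_of_star_cornerState_dotProduct fun he => ?_
    simpa [add_assoc] using squareCoord_eq_succ_of_star_edgeState_dotProduct hγ hδ he
  · obtain ⟨m, hm⟩ := exists_S9_eq_edgeState_cornerState α β γ δ i
    have horth := h m
    rw [hm, ip_pairProd, mul_eq_zero] at horth
    exact horth.symm.imp squareCoord_eq_zero_of_star_cornerState_dotProduct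
      (squareCoord_eq_succ_of_star_edgeState_dotProduct hα hβ)

theorem isUnextendible_S9_AB_CD (hα : Real.sin (2 * α) ≠ 0) (hβ : Real.sin (2 * β) ≠ 0)
    (hγ : Real.sin (2 * γ) ≠ 0) (hδ : Real.sin (2 * δ) ≠ 0) :
    IsUnextendible (S9 α β γ δ) (fun p => (p.1, p.2.1)) fun p => (p.2.2.1, p.2.2.2) := by
  intro u w (h : ∀ m, ip (S9 α β γ δ m) (pairProd u w) = 0)
  suffices huw : u = 0 ∨ w = 0 by
    funext p
    rcases huw with rfl | rfl <;> simp
  by_contra! ⟨hu, hw⟩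
  have hlock := interlocked_squareCoord hα hβ hγ hδ h
  obtain ⟨c, hc⟩ := hlock.exists_forall_eq_zero_or_eq_left (squareCoord_ne_zero hγ hδ hw)
  obtain ⟨d, hd⟩ := hlock.exists_forall_eq_zero_or_eq_right (squareCoord_ne_zero hα hβ hu)
  have hcentre : star (qubitProd (vk' α) (vk' β)) ⬝ᵥ u = 0 ∨
      star (qubitProd (vk' γ) (vk' δ)) ⬝ᵥ w = 0 := by
    rw [← mul_eq_zero, ← ip_pairProd, ← pv_eq_pairProd]
    exact h 8
  exact hcentre.elim (fun h8 => hu (eq_zero_of_squareCoord_eq hα hβ hc h8))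
    fun h8 => hw (eq_zero_of_squareCoord_eq hγ hδ hd h8)

theorem isUnextendible_S9_AC_BD (hα : Real.sin (2 * α) ≠ 0) (hβ : Real.sin (2 * β) ≠ 0)
    (hγ : Real.sin (2 * γ) ≠ 0) (hδ : Real.sin (2 * δ) ≠ 0) :
    IsUnextendible (S9 α β γ δ) (fun p => (p.1, p.2.2.1)) fun p => (p.2.1, p.2.2.2) :=
  .of_comp_equiv qubitRotation (exists_S9_comp_qubitRotation α β γ δ)
    ((isUnextendible_S9_AB_CD hα hγ hδ hβ).comp_right Prod.swap)

theorem isUnextendible_S9_AD_BC (hα : Real.sin (2 * α) ≠ 0) (hβ : Real.sin (2 * β) ≠ 0)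
    (hγ : Real.sin (2 * γ) ≠ 0) (hδ : Real.sin (2 * δ) ≠ 0) :
    IsUnextendible (S9 α β γ δ) (fun p => (p.1, p.2.2.2)) fun p => (p.2.1, p.2.2.1) :=
  .of_comp_equiv qubitRotation (exists_S9_comp_qubitRotation α β γ δ)
    ((isUnextendible_S9_AC_BD hα hγ hδ hβ).comp_right Prod.swap)

theorem stmt10_general (hα : Real.sin (2 * α) ≠ 0) (hβ : Real.sin (2 * β) ≠ 0)
    (hγ : Real.sin (2 * γ) ≠ 0) (hδ : Real.sin (2 * δ) ≠ 0) :
    IsUnextendible (S9 α β γ δ) (fun p => (p.1, p.2.1)) (fun p => (p.2.2.1, p.2.2.2)) ∧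
    IsUnextendible (S9 α β γ δ) (fun p => (p.1, p.2.2.1)) (fun p => (p.2.1, p.2.2.2)) ∧
    IsUnextendible (S9 α β γ δ) (fun p => (p.1, p.2.2.2)) (fun p => (p.2.1, p.2.2.1)) :=
  ⟨isUnextendible_S9_AB_CD hα hβ hγ hδ, isUnextendible_S9_AC_BD hα hβ hγ hδ,
    isUnextendible_S9_AD_BC hα hβ hγ hδ⟩

theorem sin_two_mul_ne_zero {t : ℝ} (ht : t ∈ Set.Ioo 0 (Real.pi / 2)) : Real.sin (2 * t) ≠ 0 :=
  (Real.sin_pos_of_pos_of_lt_pi (by linarith [ht.1]) (by linarith [ht.2])).ne'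

end S9

/-- `S₉` is a UPB for each of the bipartite `4 × 4` groupings `AB:CD`, `AC:BD`,
`AD:BC`: any product vector for one of these groupings orthogonal to all nine
members is zero. -/
theorem stmt10 (α β γ δ : ℝ) (hα : α ∈ Set.Ioo 0 (Real.pi / 2))
    (hβ : β ∈ Set.Ioo 0 (Real.pi / 2)) (hγ : γ ∈ Set.Ioo 0 (Real.pi / 2))
    (hδ : δ ∈ Set.Ioo 0 (Real.pi / 2)) :
    (∀ u w : Fin 2 × Fin 2 → ℂ,
      (∀ t, ip (S9 α β γ δ t) (fun p : Q4 => u (p.1, p.2.1) * w (p.2.2.1, p.2.2.2)) = 0) →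
      (fun p : Q4 => u (p.1, p.2.1) * w (p.2.2.1, p.2.2.2)) = 0) ∧
    (∀ u w : Fin 2 × Fin 2 → ℂ,
      (∀ t, ip (S9 α β γ δ t) (fun p : Q4 => u (p.1, p.2.2.1) * w (p.2.1, p.2.2.2)) = 0) →
      (fun p : Q4 => u (p.1, p.2.2.1) * w (p.2.1, p.2.2.2)) = 0) ∧
    (∀ u w : Fin 2 × Fin 2 → ℂ,
      (∀ t, ip (S9 α β γ δ t) (fun p : Q4 => u (p.1, p.2.2.2) * w (p.2.1, p.2.2.1)) = 0) →
      (fun p : Q4 => u (p.1, p.2.2.2) * w (p.2.1, p.2.2.1)) = 0) := by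
  exact stmt10_general (sin_two_mul_ne_zero hα) (sin_two_mul_ne_zero hβ)
    (sin_two_mul_ne_zero hγ) (sin_two_mul_ne_zero hδ)
end

section
/- For all α, β, γ, δ ∈ (0, π/2), the size-9 family S₉ is a UPB for each of the six groupings of type 2×2×4 (A:B:CD, A:C:BD, A:D:BC, B:C:AD, B:D:AC, C:D:AB): for each way of merging exactly one pair of the four qubit factors into a ℂ⁴ block, the only product vector for that grouping orthogonal to all nine members of S₉ is the zero vector. -/
/-!
The four states that a qubit takes in `S₉` are pairwise independent, so a nonzero single-qubit
factor is orthogonal to at most one of them. Hence if both single-qubit factors of a product vector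
are nonzero, its two-qubit factor `w` is orthogonal to the two-qubit part of every member of `S₉`
that avoids one state at each of the two single qubits. Regard `w` as a bilinear form on the two
merged qubits and record its zeros on the `4 × 4` grid of pairs of states. Two zeros in a row make
the whole row vanish; each zero off that row then makes its column vanish; and two vanishing columns
make `w` zero. That the members left over always supply such a pattern, up to exchanging rows and
columns, is a finite check.
-/

open Finset Matrix

section PairwiseIndependent

/-- Any two vectors of the family are linearly independent, i.e. they represent distinct points of
projective space. -/
def PairwiseIndependent (K : Type*) {ι V : Type*} [Field K] [AddCommGroup V] [Module K V]
    (e : ι → V) : Prop :=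
  Pairwise fun i j ↦ LinearIndependent K ![e i, e j]

variable {K ι κ : Type*} [Field K] [StarRing K]

theorem eq_zero_of_forall_star_dotProduct_eq_zero {n : Type*} [Fintype n] {u : n → n → K}
    (hu : LinearIndependent K u) {x : n → K} (hx : ∀ i, star (u i) ⬝ᵥ x = 0) : x = 0 := by
  classical
  have hinj : Function.Injective (of u).mulVec :=
    mulVec_injective_of_isUnit (linearIndependent_rows_iff_isUnit.mp hu)
  have hstar : of u *ᵥ star x = 0 := by
    ext i
    rw [mulVec, dotProduct_star, dotProduct_comm]
    exact (congrArg star (hx i)).trans (star_zero K)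
  exact star_eq_zero.mp (hinj (hstar.trans (mulVec_zero _).symm))

namespace PairwiseIndependent

variable {e : ι → Fin 2 → K}

theorem eq_zero_of_star_dotProduct_eq_zero (he : PairwiseIndependent K e) {i j : ι}
    (hij : i ≠ j) {x : Fin 2 → K} (hi : star (e i) ⬝ᵥ x = 0) (hj : star (e j) ⬝ᵥ x = 0) : x = 0 :=
  eq_zero_of_forall_star_dotProduct_eq_zero (he hij) (Fin.forall_fin_two.mpr ⟨hi, hj⟩)

theorem exists_forall_ne_star_dotProduct_ne_zero [Nonempty ι] (he : PairwiseIndependent K e)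
    {x : Fin 2 → K} (hx : x ≠ 0) : ∃ i, ∀ j ≠ i, star (e j) ⬝ᵥ x ≠ 0 := by
  by_cases! h : ∃ i, star (e i) ⬝ᵥ x = 0
  · obtain ⟨i, hi⟩ := h
    exact ⟨i, fun j hji hj ↦ hx (he.eq_zero_of_star_dotProduct_eq_zero hji hj hi)⟩
  · exact ⟨Classical.arbitrary ι, fun j _ ↦ h j⟩

end PairwiseIndependent

/-- Some row of the grid `ι × κ` contains two positions of `s`, and the positions of `s` off this
row occupy at least two columns. A form on two-dimensional spaces that vanishes at such a set of
pairs of states is zero. Reducible, so that it is decidable on concrete grids. -/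
abbrev RowSpanning [DecidableEq ι] [DecidableEq κ] (s : Finset (ι × κ)) : Prop :=
  ∃ i, 1 < #{p ∈ s | p.1 = i} ∧ 1 < #({p ∈ s | p.1 ≠ i}.image Prod.snd)

variable {e : ι → Fin 2 → K} {f : κ → Fin 2 → K}

theorem RowSpanning.eq_zero [DecidableEq ι] [DecidableEq κ] {s : Finset (ι × κ)}
    (hs : RowSpanning s) (he : PairwiseIndependent K e)
    (hf : PairwiseIndependent K f) {W : Matrix (Fin 2) (Fin 2) K}
    (hW : ∀ p ∈ s, star (e p.1) ⬝ᵥ W *ᵥ star (f p.2) = 0) : W = 0 := by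
  obtain ⟨i, hrow, hcols⟩ := hs
  have row_eq_zero : star (e i) ᵥ* W = 0 := by
    obtain ⟨⟨i₁, j₁⟩, hmem₁, ⟨i₂, j₂⟩, hmem₂, hne⟩ := one_lt_card.mp hrow
    obtain ⟨h₁, rfl : i₁ = i⟩ := mem_filter.mp hmem₁
    obtain ⟨h₂, rfl : i₂ = i₁⟩ := mem_filter.mp hmem₂
    have hj : j₁ ≠ j₂ := fun h ↦ hne (congrArg (Prod.mk i₂) h)
    refine hf.eq_zero_of_star_dotProduct_eq_zero hj ?_ ?_ <;>
      rw [dotProduct_comm, ← dotProduct_mulVec]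
    exacts [hW _ h₁, hW _ h₂]
  have col_eq_zero {j : κ} (hj : j ∈ {p ∈ s | p.1 ≠ i}.image Prod.snd) : W *ᵥ star (f j) = 0 := by
    obtain ⟨⟨k, _⟩, hk, rfl⟩ := mem_image.mp hj
    obtain ⟨hk, hki⟩ := mem_filter.mp hk
    refine he.eq_zero_of_star_dotProduct_eq_zero hki (hW _ hk) ?_
    rw [dotProduct_mulVec, row_eq_zero, zero_dotProduct]
  obtain ⟨j₁, hj₁, j₂, hj₂, hne⟩ := one_lt_card.mp hcols
  funext k
  refine hf.eq_zero_of_star_dotProduct_eq_zero hne ?_ ?_ <;> rw [dotProduct_comm]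
  exacts [congrFun (col_eq_zero hj₁) k, congrFun (col_eq_zero hj₂) k]

theorem eq_zero_of_rowSpanning_or_rowSpanning_swap [DecidableEq ι] [DecidableEq κ]
    {s : Finset (ι × κ)} (hs : RowSpanning s ∨ RowSpanning (s.image Prod.swap))
    (he : PairwiseIndependent K e) (hf : PairwiseIndependent K f)
    {W : Matrix (Fin 2) (Fin 2) K} (hW : ∀ p ∈ s, star (e p.1) ⬝ᵥ W *ᵥ star (f p.2) = 0) :
    W = 0 := by
  obtain hs | hs := hs
  · exact hs.eq_zero he hf hW
  · refine transpose_eq_zero.mp (hs.eq_zero hf he (forall_mem_image.mpr fun p hp ↦ ?_))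
    rw [mulVec_transpose, dotProduct_comm, ← dotProduct_mulVec]
    exact hW p hp

end PairwiseIndependent

section Grouping

/-- The tuple of the values of the four qubits, which makes the position of a qubit a variable. -/
def qubit (x : Q4) : Fin 4 → Fin 2 := ![x.1, x.2.1, x.2.2.1, x.2.2.2]

/-- The product vector for the grouping `σ 0 : σ 1 : {σ 2, σ 3}` of the four qubits with factors
`a`, `b` and `w`. -/
def groupedProduct (σ : Fin 4 → Fin 4) (a b : Fin 2 → ℂ) (w : Fin 2 × Fin 2 → ℂ) : Q4 → ℂ :=
  fun x ↦ a (qubit x (σ 0)) * b (qubit x (σ 1)) * w (qubit x (σ 2), qubit x (σ 3))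

theorem qubit_injective : Function.Injective qubit := by
  rintro ⟨i, j, k, l⟩ ⟨i', j', k', l'⟩ h
  simpa [qubit, and_assoc] using h

theorem pv_apply_eq_prod (u : Fin 4 → Fin 2 → ℂ) (x : Q4) :
    pv (u 0) (u 1) (u 2) (u 3) x = ∏ q, u q (qubit x q) := by
  rw [Fin.prod_univ_four]
  rfl

variable {σ : Fin 4 → Fin 4}

theorem bijective_permute_qubit (hσ : σ.Injective) :
    Function.Bijective fun x : Q4 ↦
      (qubit x (σ 0), qubit x (σ 1), qubit x (σ 2), qubit x (σ 3)) := by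
  refine Finite.injective_iff_bijective.mp fun x y hxy ↦ qubit_injective ?_
  refine (Finite.surjective_of_injective hσ).injective_comp_right (funext fun i ↦ ?_)
  simp only [Prod.mk.injEq] at hxy
  fin_cases i
  exacts [hxy.1, hxy.2.1, hxy.2.2.1, hxy.2.2.2]

theorem ip_pv_mul_mul (x y z v a b : Fin 2 → ℂ) (w : Fin 2 × Fin 2 → ℂ) :
    ip (pv x y z v) (fun p ↦ a p.1 * b p.2.1 * w (p.2.2.1, p.2.2.2)) =
      (star x ⬝ᵥ a) * (star y ⬝ᵥ b) * (star z ⬝ᵥ of w.curry *ᵥ star v) := by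
  simp only [ip, pv, Fintype.sum_prod_type, Fin.sum_univ_two, dotProduct, mulVec, Pi.star_apply,
    RCLike.star_def, of_apply, Function.curry_apply, map_mul]
  ring

theorem ip_pv_groupedProduct (hσ : σ.Injective) (u : Fin 4 → Fin 2 → ℂ) (a b : Fin 2 → ℂ)
    (w : Fin 2 × Fin 2 → ℂ) :
    ip (pv (u 0) (u 1) (u 2) (u 3)) (groupedProduct σ a b w) =
      (star (u (σ 0)) ⬝ᵥ a) * (star (u (σ 1)) ⬝ᵥ b) *
        (star (u (σ 2)) ⬝ᵥ of w.curry *ᵥ star (u (σ 3))) := by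
  have hpv (x : Q4) : pv (u 0) (u 1) (u 2) (u 3) x =
      pv (u (σ 0)) (u (σ 1)) (u (σ 2)) (u (σ 3))
        (qubit x (σ 0), qubit x (σ 1), qubit x (σ 2), qubit x (σ 3)) := by
    rw [pv_apply_eq_prod, ← (Finite.injective_iff_bijective.mp hσ).prod_comp, Fin.prod_univ_four]
    rfl
  rw [← ip_pv_mul_mul]
  exact Fintype.sum_bijective _ (bijective_permute_qubit hσ) _ _ fun x ↦ by rw [hpv]; rfl

end Grouping

section Labels

/-- The states of the four qubits in the nine members of `S₉`: the labels `0`, `1`, `2`, `3` stand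
for `|0⟩`, `|1⟩`, the vector `a`, `b`, `c` or `d` belonging to the qubit, and its primed
companion. -/
def label : Fin 9 → Fin 4 → Fin 4 :=
  ![![0, 0, 1, 2], ![0, 1, 2, 0], ![0, 2, 0, 1],
    ![1, 1, 0, 2], ![1, 2, 1, 0], ![1, 0, 2, 1],
    ![2, 0, 0, 0], ![2, 1, 1, 1], ![3, 3, 3, 3]]

/-- The product vectors labelled as in `S₉`, with `e q k` in place of the state of qubit `q` that
has label `k`. -/
def labelledFamily (e : Fin 4 → Fin 4 → Fin 2 → ℂ) (t : Fin 9) : Q4 → ℂ :=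
  pv (e 0 (label t 0)) (e 1 (label t 1)) (e 2 (label t 2)) (e 3 (label t 3))

/-- The pairs of labels on the qubits `σ 2` and `σ 3` of those members of `S₉` whose labels on `σ 0`
and `σ 1` differ from `i` and `j`. -/
def remainingLabels (σ : Fin 4 → Fin 4) (i j : Fin 4) : Finset (Fin 4 × Fin 4) :=
  ({t | label t (σ 0) ≠ i ∧ label t (σ 1) ≠ j} : Finset (Fin 9)).image
    fun t ↦ (label t (σ 2), label t (σ 3))

theorem rowSpanning_remainingLabels_or_swap :
    ∀ {σ : Fin 4 → Fin 4}, σ.Injective → ∀ i j : Fin 4, RowSpanning (remainingLabels σ i j) ∨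
      RowSpanning ((remainingLabels σ i j).image Prod.swap) := by
  decide +kernel

/-- The states labelled `0`, `1`, `2`, `3` of a qubit with angle `θ`. -/
noncomputable def qubitStates (θ : ℝ) : Fin 4 → Fin 2 → ℂ := ![ket0, ket1, vk θ, vk' θ]

theorem S9_eq_labelledFamily (α β γ δ : ℝ) :
    S9 α β γ δ = labelledFamily (qubitStates ∘ ![α, β, γ, δ]) := by
  funext t
  fin_cases t <;> rfl

theorem pairwiseIndependent_qubitStates {θ : ℝ} (hcos : Real.cos θ ≠ 0) (hsin : Real.sin θ ≠ 0) :
    PairwiseIndependent ℂ (qubitStates θ) := by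
  have hc : Complex.cos θ ≠ 0 := by exact_mod_cast hcos
  have hs : Complex.sin θ ≠ 0 := by exact_mod_cast hsin
  have hdet : Complex.sin θ * Complex.sin θ + Complex.cos θ * Complex.cos θ = 1 := by
    simpa only [sq] using Complex.sin_sq_add_cos_sq θ
  have hdet' : -(Complex.cos θ * Complex.cos θ) - Complex.sin θ * Complex.sin θ = -1 := by
    linear_combination -hdet
  intro k l hkl
  refine linearIndependent_rows_of_det_ne_zero (A := of ![qubitStates θ k, qubitStates θ l]) ?_
  rw [det_fin_two]
  fin_cases k <;> fin_cases l <;> first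
    | exact absurd rfl hkl
    | simp [qubitStates, ket0, ket1, vk, vk', hc, hs, hdet, hdet']

theorem pairwiseIndependent_qubitStates_of_mem_Ioo {θ : ℝ} (hθ : θ ∈ Set.Ioo 0 (Real.pi / 2)) :
    PairwiseIndependent ℂ (qubitStates θ) :=
  pairwiseIndependent_qubitStates
    (Real.cos_pos_of_mem_Ioo ⟨by linarith [hθ.1, hθ.2], hθ.2⟩).ne'
    (Real.sin_pos_of_pos_of_lt_pi hθ.1 (by linarith [hθ.1, hθ.2])).ne'

end Labels

theorem stmt11_general {e : Fin 4 → Fin 4 → Fin 2 → ℂ}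
    (he : ∀ q, PairwiseIndependent ℂ (e q)) {σ : Fin 4 → Fin 4} (hσ : σ.Injective)
    (a b : Fin 2 → ℂ) (w : Fin 2 × Fin 2 → ℂ)
    (h : ∀ t, ip (labelledFamily e t) (groupedProduct σ a b w) = 0) :
    groupedProduct σ a b w = 0 := by
  by_cases ha : a = 0
  · simp [groupedProduct, funext_iff, ha]
  by_cases hb : b = 0
  · simp [groupedProduct, funext_iff, hb]
  obtain ⟨i, hi⟩ := (he (σ 0)).exists_forall_ne_star_dotProduct_ne_zero ha
  obtain ⟨j, hj⟩ := (he (σ 1)).exists_forall_ne_star_dotProduct_ne_zero hb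
  have hw : of w.curry = 0 := by
    refine eq_zero_of_rowSpanning_or_rowSpanning_swap
      (rowSpanning_remainingLabels_or_swap hσ i j) (he (σ 2)) (he (σ 3))
      (forall_mem_image.mpr fun t ht ↦ ?_)
    obtain ⟨hti, htj⟩ := (mem_filter.mp ht).2
    have hfactor := (ip_pv_groupedProduct hσ (fun q ↦ e q (label t q)) a b w).symm.trans (h t)
    exact (mul_eq_zero.mp hfactor).resolve_left (mul_ne_zero (hi _ hti) (hj _ htj))
  funext x
  have hwx : w (qubit x (σ 2), qubit x (σ 3)) = 0 := congrFun₂ hw _ _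
  simp [groupedProduct, hwx]

/-- `S₉` is a UPB for each of the six `2 × 2 × 4` groupings
`A:B:CD`, `A:C:BD`, `A:D:BC`, `B:C:AD`, `B:D:AC`, `C:D:AB`: any product vector for
one of these groupings orthogonal to all nine members is zero. -/
theorem stmt11 (α β γ δ : ℝ) (hα : α ∈ Set.Ioo 0 (Real.pi / 2))
    (hβ : β ∈ Set.Ioo 0 (Real.pi / 2)) (hγ : γ ∈ Set.Ioo 0 (Real.pi / 2))
    (hδ : δ ∈ Set.Ioo 0 (Real.pi / 2)) :
    (∀ (a b : Fin 2 → ℂ) (w : Fin 2 × Fin 2 → ℂ),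
      (∀ t, ip (S9 α β γ δ t) (fun p : Q4 => a p.1 * b p.2.1 * w (p.2.2.1, p.2.2.2)) = 0) →
      (fun p : Q4 => a p.1 * b p.2.1 * w (p.2.2.1, p.2.2.2)) = 0) ∧
    (∀ (a c : Fin 2 → ℂ) (w : Fin 2 × Fin 2 → ℂ),
      (∀ t, ip (S9 α β γ δ t) (fun p : Q4 => a p.1 * c p.2.2.1 * w (p.2.1, p.2.2.2)) = 0) →
      (fun p : Q4 => a p.1 * c p.2.2.1 * w (p.2.1, p.2.2.2)) = 0) ∧
    (∀ (a d : Fin 2 → ℂ) (w : Fin 2 × Fin 2 → ℂ),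
      (∀ t, ip (S9 α β γ δ t) (fun p : Q4 => a p.1 * d p.2.2.2 * w (p.2.1, p.2.2.1)) = 0) →
      (fun p : Q4 => a p.1 * d p.2.2.2 * w (p.2.1, p.2.2.1)) = 0) ∧
    (∀ (b c : Fin 2 → ℂ) (w : Fin 2 × Fin 2 → ℂ),
      (∀ t, ip (S9 α β γ δ t) (fun p : Q4 => b p.2.1 * c p.2.2.1 * w (p.1, p.2.2.2)) = 0) →
      (fun p : Q4 => b p.2.1 * c p.2.2.1 * w (p.1, p.2.2.2)) = 0) ∧
    (∀ (b d : Fin 2 → ℂ) (w : Fin 2 × Fin 2 → ℂ),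
      (∀ t, ip (S9 α β γ δ t) (fun p : Q4 => b p.2.1 * d p.2.2.2 * w (p.1, p.2.2.1)) = 0) →
      (fun p : Q4 => b p.2.1 * d p.2.2.2 * w (p.1, p.2.2.1)) = 0) ∧
    (∀ (c d : Fin 2 → ℂ) (w : Fin 2 × Fin 2 → ℂ),
      (∀ t, ip (S9 α β γ δ t) (fun p : Q4 => c p.2.2.1 * d p.2.2.2 * w (p.1, p.2.1)) = 0) →
      (fun p : Q4 => c p.2.2.1 * d p.2.2.2 * w (p.1, p.2.1)) = 0) := by
  rw [S9_eq_labelledFamily]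
  have upb (σ : Fin 4 → Fin 4) (hσ : σ.Injective) :=
    stmt11_general (e := qubitStates ∘ ![α, β, γ, δ])
      (by simp [Fin.forall_fin_succ, pairwiseIndependent_qubitStates_of_mem_Ioo, *]) hσ
  exact ⟨upb ![0, 1, 2, 3] (by decide), upb ![0, 2, 1, 3] (by decide),
    upb ![0, 3, 1, 2] (by decide), upb ![1, 2, 0, 3] (by decide),
    upb ![1, 3, 0, 2] (by decide), upb ![2, 3, 0, 1] (by decide)⟩
end

section
/- For all real α, β, γ, δ, the 8×8 real matrix U defined below is orthogonal: U · Uᵀ = 1 (equivalently, U is unitary). -/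
open Real

/-- The `8 × 8` real matrix `U` built from
`x₁ = sin β sin γ sin δ`, `x₂ = cos α cos γ sin δ`, `x₃ = cos α sin β cos δ`,
`x₄ = cos α cos β sin γ`, `x₅ = cos β cos γ cos δ`, `x₆ = sin α sin γ cos δ`,
`x₇ = sin α cos β sin δ`, `x₈ = sin α sin β cos γ`. -/
noncomputable def U8 (α β γ δ : ℝ) : Matrix (Fin 8) (Fin 8) ℝ :=
  let x1 := sin β * sin γ * sin δ
  let x2 := cos α * cos γ * sin δ
  let x3 := cos α * sin β * cos δ
  let x4 := cos α * cos β * sin γ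
  let x5 := cos β * cos γ * cos δ
  let x6 := sin α * sin γ * cos δ
  let x7 := sin α * cos β * sin δ
  let x8 := sin α * sin β * cos γ
  !![x1,  x2,  x3,  x4,  -x5, -x6, -x7, -x8;
     x2,  -x1, -x4, x3,  x6,  -x5, -x8, x7;
     x3,  x4,  -x1, -x2, x7,  x8,  -x5, -x6;
     x4,  -x3, x2,  -x1, x8,  -x7, x6,  -x5;
     -x5, -x6, -x7, -x8, -x1, -x2, -x3, -x4;
     -x6, x5,  -x8, x7,  x2,  -x1, x4,  -x3;
     x7,  -x8, -x5, x6,  -x3, x4,  x1,  -x2;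
     x8,  x7,  -x6, -x5, -x4, -x3, x2,  x1]

/-!
Up to the signs of some rows and columns, `U` is the matrix of right multiplication by the octonion
`(p, q)`, where `p = x₁ + x₂i + x₃j + x₄k` and `q = x₅ + x₆i + x₇j + x₈k`: in Cayley-Dickson form,
`(v, w)(p, q) = (vp - q̄w, qv + wp̄)`. Left multiplications by quaternions commute with right ones,
so the off-diagonal blocks of `U Uᵀ` cancel, and its diagonal blocks are scalar, equal to
`|p|² + |q|² = ∑ xᵢ²`.

This sum is `1`: read `sin²` and `cos²` of each angle as the probabilities of the two faces of a
coin, the four coins being independent. The coins `β, γ, δ` agree with probability `x₁² + x₅²`. The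
event that they disagree splits into `(sin² γ cos² δ) + (cos² β sin² δ) + (sin² β cos² γ)`, and
equally into the terms with `sin` and `cos` exchanged; the coin `α` chooses one of the two
splittings, which gives the other six squares.
-/

open Matrix Quaternion

section BlockMatrix

variable {R n : Type*} [CommRing R] [Fintype n] [DecidableEq n]

theorem fromBlocks_mul_transpose_eq_smul_one {A B : Matrix n n R} {a b : R}
    (hA : A * Aᵀ = a • 1) (hA' : Aᵀ * A = a • 1) (hB : B * Bᵀ = b • 1) (hB' : Bᵀ * B = b • 1)
    (hAB : Commute A Bᵀ) :
    fromBlocks A (-Bᵀ) B Aᵀ * (fromBlocks A (-Bᵀ) B Aᵀ)ᵀ = (a + b) • 1 := by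
  have hBA : B * Aᵀ = Aᵀ * B := by simpa using congrArg transpose hAB.eq
  rw [fromBlocks_transpose, fromBlocks_multiply, ← fromBlocks_one, fromBlocks_smul]
  simp [hA, hA', hB, hB', hAB.eq, hBA, add_smul, add_comm]

theorem diagonal_mul_mul_diagonal_mul_transpose_eq_smul_one {s t : n → R} {M : Matrix n n R} {c : R}
    (hs : ∀ i, s i * s i = 1) (ht : ∀ i, t i * t i = 1) (hM : M * Mᵀ = c • 1) :
    diagonal s * M * diagonal t * (diagonal s * M * diagonal t)ᵀ = c • 1 :=
  have diagonal_sq {d : n → R} (hd : ∀ i, d i * d i = 1) : diagonal d * diagonal d = 1 := by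
    rw [diagonal_mul_diagonal, funext hd, diagonal_one]
  calc diagonal s * M * diagonal t * (diagonal s * M * diagonal t)ᵀ
      = diagonal s * (M * (diagonal t * diagonal t) * Mᵀ) * diagonal s := by
        simp only [transpose_mul, diagonal_transpose, Matrix.mul_assoc]
    _ = diagonal s * (c • 1) * diagonal s := by rw [diagonal_sq ht, Matrix.mul_one, hM]
    _ = c • 1 := by rw [Matrix.mul_smul, Matrix.mul_one, Matrix.smul_mul, diagonal_sq hs]

theorem submatrix_equiv_mul_transpose_eq_smul_one {m : Type*} [Fintype m] [DecidableEq m]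
    {M : Matrix n n R} {c : R} (e : m ≃ n) (hM : M * Mᵀ = c • 1) :
    M.submatrix e e * (M.submatrix e e)ᵀ = c • 1 := by
  rw [transpose_submatrix, submatrix_mul_equiv, hM]
  ext i j
  simp [one_apply]

end BlockMatrix

section RightMulMatrix

variable {R A n : Type*} [CommRing R] [Ring A] [Algebra R A] [Fintype n] [DecidableEq n]

/-- The matrix of right multiplication by `a` in the basis `b`, the mirror image of
`Algebra.leftMulMatrix`. It is not bundled as a homomorphism, since it reverses products. -/
noncomputable def rightMulMatrix (b : Module.Basis n R A) (a : A) : Matrix n n R :=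
  LinearMap.toMatrix b b (LinearMap.mulRight R a)

theorem rightMulMatrix_mul (b : Module.Basis n R A) (x y : A) :
    rightMulMatrix b (x * y) = rightMulMatrix b y * rightMulMatrix b x := by
  rw [rightMulMatrix, LinearMap.mulRight_mul, LinearMap.toMatrix_comp b b b]
  rfl

theorem rightMulMatrix_algebraMap (b : Module.Basis n R A) (r : R) :
    rightMulMatrix b (algebraMap R A r) = r • 1 := by
  have : LinearMap.mulRight R (algebraMap R A r) = r • LinearMap.id := by
    ext x
    simp [Algebra.smul_def, Algebra.commutes]
  rw [rightMulMatrix, this, map_smul, LinearMap.toMatrix_id]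

theorem commute_rightMulMatrix_leftMulMatrix (b : Module.Basis n R A) (x y : A) :
    Commute (rightMulMatrix b x) (Algebra.leftMulMatrix b y) :=
  (LinearMap.commute_mulLeft_right y x).symm.map (LinearMap.toMatrixAlgEquiv b)

end RightMulMatrix

section Quaternion

variable {R : Type*} [CommRing R]

/-- The basis `1, i, j, k` of `ℍ[R]`: `QuaternionAlgebra.basisOneIJK` with the type of its vectors
stated as `ℍ[R]`, so that the multiplication and the norm of `ℍ[R]` apply to them. -/
noncomputable def quaternionBasis : Module.Basis (Fin 4) R ℍ[R] :=
  QuaternionAlgebra.basisOneIJK (-1) 0 (-1)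

theorem coe_quaternionBasis_repr (q : ℍ[R]) :
    ⇑(quaternionBasis.repr q) = ![q.re, q.imI, q.imJ, q.imK] :=
  rfl

theorem leftMulMatrix_quaternionBasis (q : ℍ[R]) :
    Algebra.leftMulMatrix quaternionBasis q =
      !![q.re,  -q.imI, -q.imJ, -q.imK;
         q.imI, q.re,   -q.imK, q.imJ;
         q.imJ, q.imK,  q.re,   -q.imI;
         q.imK, -q.imJ, q.imI,  q.re] := by
  apply mulVec_injective
  ext v i
  obtain ⟨x, rfl⟩ := quaternionBasis.equivFun.surjective v
  rw [Module.Basis.equivFun_apply, Algebra.leftMulMatrix_mulVec_repr, coe_quaternionBasis_repr,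
    coe_quaternionBasis_repr]
  fin_cases i <;> simp [mulVec, dotProduct, Fin.sum_univ_four] <;> ring

theorem rightMulMatrix_quaternionBasis (q : ℍ[R]) :
    rightMulMatrix quaternionBasis q =
      !![q.re,  -q.imI, -q.imJ, -q.imK;
         q.imI, q.re,   q.imK,  -q.imJ;
         q.imJ, -q.imK, q.re,   q.imI;
         q.imK, q.imJ,  -q.imI, q.re] := by
  apply mulVec_injective
  ext v i
  obtain ⟨x, rfl⟩ := quaternionBasis.equivFun.surjective v
  rw [Module.Basis.equivFun_apply, rightMulMatrix, LinearMap.toMatrix_mulVec_repr,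
    LinearMap.mulRight_apply, coe_quaternionBasis_repr, coe_quaternionBasis_repr]
  fin_cases i <;> simp [mulVec, dotProduct, Fin.sum_univ_four] <;> ring

theorem leftMulMatrix_quaternionBasis_star (q : ℍ[R]) :
    Algebra.leftMulMatrix quaternionBasis (star q) =
      (Algebra.leftMulMatrix quaternionBasis q)ᵀ := by
  simp only [leftMulMatrix_quaternionBasis]
  ext i j
  fin_cases i <;> fin_cases j <;> simp

theorem rightMulMatrix_quaternionBasis_star (q : ℍ[R]) :
    rightMulMatrix quaternionBasis (star q) = (rightMulMatrix quaternionBasis q)ᵀ := by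
  simp only [rightMulMatrix_quaternionBasis]
  ext i j
  fin_cases i <;> fin_cases j <;> simp

theorem leftMulMatrix_quaternionBasis_normSq (q : ℍ[R]) :
    Algebra.leftMulMatrix quaternionBasis (↑(normSq q) : ℍ[R]) = normSq q • 1 := by
  rw [← Quaternion.algebraMap_def, AlgHom.commutes, Algebra.algebraMap_eq_smul_one]

theorem rightMulMatrix_quaternionBasis_normSq (q : ℍ[R]) :
    rightMulMatrix quaternionBasis (↑(normSq q) : ℍ[R]) = normSq q • 1 := by
  rw [← Quaternion.algebraMap_def, rightMulMatrix_algebraMap]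

theorem normSq_equivTuple_symm (v : Fin 4 → R) :
    normSq ((equivTuple R).symm v) = ∑ i, v i ^ 2 := by
  rw [normSq_def', Fin.sum_univ_four]
  rfl

/-- The matrix of right multiplication by the octonion `(p, q)`, in the Cayley-Dickson convention
`(v, w)(p, q) = (vp - q̄w, qv + wp̄)`. Conjugating a quaternion transposes the two matrices of
multiplication by it, which is how `p̄` and `q̄` are encoded. -/
noncomputable def octonionRightMatrix (p q : ℍ[R]) : Matrix (Fin 4 ⊕ Fin 4) (Fin 4 ⊕ Fin 4) R :=
  fromBlocks (rightMulMatrix quaternionBasis p) (-(Algebra.leftMulMatrix quaternionBasis q)ᵀ)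
    (Algebra.leftMulMatrix quaternionBasis q) (rightMulMatrix quaternionBasis p)ᵀ

theorem octonionRightMatrix_mul_transpose (p q : ℍ[R]) :
    octonionRightMatrix p q * (octonionRightMatrix p q)ᵀ = (normSq p + normSq q) • 1 := by
  apply fromBlocks_mul_transpose_eq_smul_one
  · rw [← rightMulMatrix_quaternionBasis_star, ← rightMulMatrix_mul, star_mul_self,
      rightMulMatrix_quaternionBasis_normSq]
  · rw [← rightMulMatrix_quaternionBasis_star, ← rightMulMatrix_mul, self_mul_star,
      rightMulMatrix_quaternionBasis_normSq]
  · rw [← leftMulMatrix_quaternionBasis_star, ← map_mul, self_mul_star,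
      leftMulMatrix_quaternionBasis_normSq]
  · rw [← leftMulMatrix_quaternionBasis_star, ← map_mul, star_mul_self,
      leftMulMatrix_quaternionBasis_normSq]
  · rw [← leftMulMatrix_quaternionBasis_star]
    exact commute_rightMulMatrix_leftMulMatrix _ _ _

end Quaternion

section Design

variable {R : Type*} [CommRing R]

/-- The matrix `U` with free entries `x₁, …, x₈`, here `x 0, …, x 7`: an orthogonal design of
order `8`, of which `U8` is the trigonometric specialization. -/
def orthogonalDesign (x : Fin 8 → R) : Matrix (Fin 8) (Fin 8) R :=
  !![x 0,  x 1,  x 2,  x 3,  -x 4, -x 5, -x 6, -x 7;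
     x 1,  -x 0, -x 3, x 2,  x 5,  -x 4, -x 7, x 6;
     x 2,  x 3,  -x 0, -x 1, x 6,  x 7,  -x 4, -x 5;
     x 3,  -x 2, x 1,  -x 0, x 7,  -x 6, x 5,  -x 4;
     -x 4, -x 5, -x 6, -x 7, -x 0, -x 1, -x 2, -x 3;
     -x 5, x 4,  -x 7, x 6,  x 1,  -x 0, x 3,  -x 2;
     x 6,  -x 7, -x 4, x 5,  -x 2, x 3,  x 0,  -x 1;
     x 7,  x 6,  -x 5, -x 4, -x 3, -x 2, x 1,  x 0]

-- In terms of the product `(v, w)(p, q)`, the column signs conjugate `v`, and the row signs are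
-- `t ↦ iti` on the second component of the product.
theorem orthogonalDesign_eq_submatrix (x : Fin 8 → R) :
    orthogonalDesign x =
      (diagonal (Sum.elim 1 ![-1, -1, 1, 1]) *
        octonionRightMatrix ((equivTuple R).symm ![x 0, x 1, x 2, x 3])
          ((equivTuple R).symm ![x 4, x 5, x 6, x 7]) *
        diagonal (Sum.elim ![1, -1, -1, -1] 1)).submatrix
          (finSumFinEquiv (m := 4) (n := 4)).symm (finSumFinEquiv (m := 4) (n := 4)).symm := by
  rw [octonionRightMatrix, leftMulMatrix_quaternionBasis, rightMulMatrix_quaternionBasis]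
  ext i j
  obtain ⟨i, rfl⟩ := (finSumFinEquiv (m := 4) (n := 4)).surjective i
  obtain ⟨j, rfl⟩ := (finSumFinEquiv (m := 4) (n := 4)).surjective j
  rw [submatrix_apply, Equiv.symm_apply_apply, Equiv.symm_apply_apply, mul_diagonal, diagonal_mul]
  rcases i with i | i <;> rcases j with j | j <;> fin_cases i <;> fin_cases j <;> simp <;> rfl

theorem stmt13_general (x : Fin 8 → R) :
    orthogonalDesign x * (orthogonalDesign x)ᵀ = (∑ i, x i ^ 2) • 1 := by
  have hnorm : ∑ i, x i ^ 2 = normSq ((equivTuple R).symm ![x 0, x 1, x 2, x 3]) +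
      normSq ((equivTuple R).symm ![x 4, x 5, x 6, x 7]) := by
    simp [normSq_equivTuple_symm, Fin.sum_univ_eight, Fin.sum_univ_four, add_assoc,
      -equivTuple_symm_apply]
  rw [orthogonalDesign_eq_submatrix, hnorm]
  apply submatrix_equiv_mul_transpose_eq_smul_one
  apply diagonal_mul_mul_diagonal_mul_transpose_eq_smul_one
  · simp [Fin.forall_fin_succ]
  · simp [Fin.forall_fin_succ]
  · exact octonionRightMatrix_mul_transpose _ _

end Design

theorem sum_mul_mul_eq_one_of_add_eq_one {R : Type*} [CommRing R] {a a' b b' c c' d d' : R}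
    (ha : a + a' = 1) (hb : b + b' = 1) (hc : c + c' = 1) (hd : d + d' = 1) :
    b * c * d + a' * c' * d + a' * b * d' + a' * b' * c +
      b' * c' * d' + a * c * d' + a * b' * d + a * b * c' = 1 := by
  have hcyc : c' * d + b * d' + b' * c = c * d' + b' * d + b * c' := by
    linear_combination (c - d) * hb + (d - b) * hc + (b - c) * hd
  calc b * c * d + a' * c' * d + a' * b * d' + a' * b' * c +
        b' * c' * d' + a * c * d' + a * b' * d + a * b * c'
      = b * c * d + b' * c' * d' + a * (c * d' + b' * d + b * c') +
          a' * (c' * d + b * d' + b' * c) := by ring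
    _ = b * c * d + b' * c' * d' + (c * d' + b' * d + b * c') := by
        rw [hcyc, add_assoc, ← add_mul, ha, one_mul]
    _ = (b + b') * (c + c') * (d + d') := by
        linear_combination (-c * d') * hb - (b' * d) * hc - (b * c') * hd
    _ = 1 := by rw [hb, hc, hd, one_mul, one_mul]

/-- The vector `(x₁, …, x₈)` of trigonometric products from which `U8` is built. -/
noncomputable def angleCoordinates (α β γ δ : ℝ) : Fin 8 → ℝ :=
  ![sin β * sin γ * sin δ, cos α * cos γ * sin δ, cos α * sin β * cos δ, cos α * cos β * sin γ,
    cos β * cos γ * cos δ, sin α * sin γ * cos δ, sin α * cos β * sin δ, sin α * sin β * cos γ]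

theorem U8_eq_orthogonalDesign (α β γ δ : ℝ) :
    U8 α β γ δ = orthogonalDesign (angleCoordinates α β γ δ) :=
  rfl

theorem sum_sq_angleCoordinates (α β γ δ : ℝ) : ∑ i, angleCoordinates α β γ δ i ^ 2 = 1 := by
  simpa [angleCoordinates, Fin.sum_univ_eight, mul_pow] using
    sum_mul_mul_eq_one_of_add_eq_one (sin_sq_add_cos_sq α) (sin_sq_add_cos_sq β)
      (sin_sq_add_cos_sq γ) (sin_sq_add_cos_sq δ)

/-- For all real `α, β, γ, δ` the matrix `U8 α β γ δ` is orthogonal: `U Uᵀ = 1`. -/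
theorem stmt13 (α β γ δ : ℝ) : U8 α β γ δ * (U8 α β γ δ).transpose = 1 := by
  rw [U8_eq_orthogonalDesign, stmt13_general, sum_sq_angleCoordinates, one_smul]
end
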